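/- For each k ≥ 1, the set of IE-tuples of length k of the system (X,G) is equal to the closure in X^k of the union, over all G-invariant Borel probability measures μ on X, of the sets IE^μ_k(X) of μ-IE-tuples of length k. -/

import Mathlib

open MeasureTheory Set
open scoped Classical ENNReal

/-- `F` is a nonempty `(K,δ)`-invariant finite subset of the group `G`. -/
def FolnerInv {G : Type*} [Group G] (K : Finset G) (δ : ℝ) (F : Finset G) : Prop :=
  F.Nonempty ∧
    (1 - δ) * (F.card : ℝ) ≤ (((F : Set G)) ∩ {s : G | ∀ g ∈ K, g * s ∈ F}).ncard

/-- The Følner characterisation of amenability for a discrete group `G`. -/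
def FolnerAmenable (G : Type*) [Group G] : Prop :=
  ∀ (K : Finset G) (δ : ℝ), 0 < δ → ∃ F : Finset G, FolnerInv K δ F

/-- The limit supremum of `ψ F / |F|` as `F` becomes more and more invariant. -/
noncomputable def invLimsup {G : Type*} [Group G] (ψ : Finset G → ℝ) : ℝ :=
  ⨅ (K : Finset G) (δ : {d : ℝ // 0 < d}),
    sSup ((fun F : Finset G => ψ F / (F.card : ℝ)) '' {F : Finset G | FolnerInv K δ.1 F})

/-- The limit infimum of `ψ F / |F|` as `F` becomes more and more invariant. -/
noncomputable def invLiminf {G : Type*} [Group G] (ψ : Finset G → ℝ) : ℝ :=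
  ⨆ (K : Finset G) (δ : {d : ℝ // 0 < d}),
    sInf ((fun F : Finset G => ψ F / (F.card : ℝ)) '' {F : Finset G | FolnerInv K δ.1 F})

/-- `J ⊆ G` is an independence set for the tuple `A` of subsets of `X` relative to the
map `D : G → Set X`. -/
def IndepRel {G X : Type*} [Group G] [MulAction G X] {k : ℕ} (A : Fin k → Set X)
    (D : G → Set X) (J : Set G) : Prop :=
  ∀ F : Finset G, (F : Set G) ⊆ J → F.Nonempty → ∀ σ : G → Fin k,
    (⋂ s ∈ F, (D s ∩ (fun x => s • x) ⁻¹' A (σ s))).Nonempty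

/-- `J ⊆ G` is an independence set for the tuple `A` relative to the subset `D ⊆ X`. -/
def IndepSet {G X : Type*} [Group G] [MulAction G X] {k : ℕ} (A : Fin k → Set X)
    (D : Set X) (J : Set G) : Prop :=
  IndepRel A (fun _ => D) J

/-- The maximum of `|F ∩ J|` over independence sets `J` for `A` relative to `D`. -/
noncomputable def maxIndep {G X : Type*} [Group G] [MulAction G X] {k : ℕ}
    (A : Fin k → Set X) (D : G → Set X) (F : Finset G) : ℕ :=
  sSup {m : ℕ | ∃ J : Set G, IndepRel A D J ∧ m = (((F : Set G)) ∩ J).ncard}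

/-- `φ_{A,δ}(F)`: the minimum over Borel sets `D` with `μ(D) ≥ 1 - δ` of the maximum
of `|F ∩ J|` over independence sets `J` for `A` relative to `D`. -/
noncomputable def phiConst {G X : Type*} [Group G] [MulAction G X] [MeasurableSpace X]
    (μ : Measure X) {k : ℕ} (A : Fin k → Set X) (δ : ℝ) (F : Finset G) : ℕ :=
  sInf {m : ℕ | ∃ D : Set X, MeasurableSet D ∧ 1 - δ ≤ (μ D).toReal ∧
    m = maxIndep A (fun _ : G => D) F}

/-- `φ'_{A,δ}(F)`: as `phiConst` but with maps `D : G → Set X` with `μ(D s) ≥ 1 - δ`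
for all `s`. -/
noncomputable def phiMap {G X : Type*} [Group G] [MulAction G X] [MeasurableSpace X]
    (μ : Measure X) {k : ℕ} (A : Fin k → Set X) (δ : ℝ) (F : Finset G) : ℕ :=
  sInf {m : ℕ | ∃ D : G → Set X, (∀ s, MeasurableSet (D s)) ∧
    (∀ s, 1 - δ ≤ (μ (D s)).toReal) ∧ m = maxIndep A D F}

/-- The upper `μ`-independence density `Ī_μ(A)` of the tuple `A`. -/
noncomputable def upperIndepDens (G : Type*) {X : Type*} [Group G] [MulAction G X]
    [MeasurableSpace X] (μ : Measure X) {k : ℕ} (A : Fin k → Set X) : ℝ :=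
  ⨆ δ : {d : ℝ // 0 < d}, invLimsup (fun F : Finset G => (phiConst μ A δ.1 F : ℝ))

/-- The lower `μ`-independence density `I̲_μ(A)` of the tuple `A`. -/
noncomputable def lowerIndepDens (G : Type*) {X : Type*} [Group G] [MulAction G X]
    [MeasurableSpace X] (μ : Measure X) {k : ℕ} (A : Fin k → Set X) : ℝ :=
  ⨆ δ : {d : ℝ // 0 < d}, invLiminf (fun F : Finset G => (phiConst μ A δ.1 F : ℝ))

/-- The measure `μ` is invariant under the action of `G`. -/
def InvariantMeasure (G : Type*) {X : Type*} [Group G] [MulAction G X] [MeasurableSpace X]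
    (μ : Measure X) : Prop :=
  ∀ (s : G) (B : Set X), MeasurableSet B → μ ((fun x => s • x) ⁻¹' B) = μ B

/-- The entropy `H_μ(𝒫^F)` of the join `⋁_{s ∈ F} s⁻¹𝒫` of the finite partition `P`. -/
noncomputable def HJoin {G X : Type*} [Group G] [MulAction G X] [MeasurableSpace X]
    (μ : Measure X) {k : ℕ} (P : Fin k → Set X) (F : Finset G) : ℝ :=
  ∑ f : ↥F → Fin k,
    Real.negMulLog (μ (⋂ s : ↥F, (fun x => (s : G) • x) ⁻¹' P (f s))).toReal

/-- `P` is a finite measurable partition of `X` (members may be empty). -/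
def IsMeasPartition {X : Type*} [MeasurableSpace X] {k : ℕ} (P : Fin k → Set X) : Prop :=
  (∀ i, MeasurableSet (P i)) ∧ (Pairwise fun i j => Disjoint (P i) (P j)) ∧
    (⋃ i, P i) = Set.univ

/-- `x` is a (topological) IE-tuple for the action of `G` on `X`. -/
def IsIETuple (G : Type*) {X : Type*} [Group G] [TopologicalSpace X] [MulAction G X]
    {k : ℕ} (x : Fin k → X) : Prop :=
  ∀ U : Fin k → Set X, (∀ i, U i ∈ nhds (x i)) →
    ∃ d : ℝ, 0 < d ∧ ∀ (K : Finset G) (δ : ℝ), 0 < δ →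
      ∃ (F : Finset G) (J : Set G), FolnerInv K δ F ∧ IndepSet U (Set.univ : Set X) J ∧
        d * (F.card : ℝ) ≤ (((F : Set G)) ∩ J).ncard

/-- `x` is a `μ`-IE-tuple. -/
def IsMuIETuple (G : Type*) {X : Type*} [Group G] [TopologicalSpace X] [MulAction G X]
    [MeasurableSpace X] (μ : Measure X) {k : ℕ} (x : Fin k → X) : Prop :=
  ∀ U : Fin k → Set X, (∀ i, U i ∈ nhds (x i)) → 0 < upperIndepDens G μ U

/-!
Both inclusions rest on counting patterns. For `U` a tuple of `k` sets, `D` a set of points and `J`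
a finite subset of `G`, consider the words `σ : J → Fin k` for which some `x ∈ D` satisfies
`s • x ∈ U (σ s)` for all `s ∈ J`. If there are at least `(k - 1/2) ^ |J|` of them, then they
shatter a subset of `J` of proportional size (Sauer–Shelah–Pajor), which is an independence set
relative to `D`.

A `μ`-IE-tuple is an IE-tuple, because one may take `D = X`, and the IE-tuples form a closed set.
Conversely let `U` be a tuple of closed neighbourhoods of an IE-tuple. On an independence set `J ⊆
F` of density `d` in an almost invariant `F`, choose a word uniformly at random, and then a point
following it along `J`. The law of the pair of point and word, averaged over the translates by `F`,
has a weak limit `ν` which is an invariant measure on the space of pairs of a point and a partial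
labelling of `G` compatible with `U`. Under `ν` an element of `G` is labelled with probability at
least `d`, and all labellings of a given finite set remain equally likely. So if `μ` is the
projection of `ν` to `X` and `μ D` is close to `1`, then on some `J ⊆ F` with `|J| ≥ d |F| / 2`
more than half of the words are followed by points of `D`; hence `U` has positive `μ`-independence
density. Finally, positivity of the density survives when one entry of the tuple is split in two
and one of the halves is kept, by counting patterns for a well chosen splitting at each `s ∈ J`,
and compactness then provides a `μ`-IE-tuple inside `U`.
-/

section Shattering

variable {ι κ : Type*}

/-- A set `S` of words over the alphabet `κ` shatters a set `I` of coordinates if every word agrees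
on `I` with some member of `S`. -/
def Shatters (S : Finset (ι → κ)) (I : Finset ι) : Prop :=
  ∀ σ : ι → κ, ∃ τ ∈ S, ∀ i ∈ I, τ i = σ i

lemma Shatters.of_image_update {S : Finset (ι → κ)} {I : Finset ι} {a : ι} {c : κ} (ha : a ∉ I)
    (h : Shatters (S.image fun σ => Function.update σ a c) I) : Shatters S I := by
  intro σ
  obtain ⟨τ, hτ, hτσ⟩ := h σ
  obtain ⟨ρ, hρ, rfl⟩ := Finset.mem_image.1 hτ
  exact ⟨ρ, hρ, fun i hi => by
    rw [← hτσ i hi, Function.update_of_ne (ne_of_mem_of_not_mem hi ha)]⟩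

lemma Shatters.insert_of_forall_update_mem {S T : Finset (ι → κ)} {I : Finset ι} {a : ι}
    (hST : ∀ τ ∈ T, ∀ b, Function.update τ a b ∈ S) (h : Shatters T I) :
    Shatters S (insert a I) := by
  intro σ
  obtain ⟨τ, hτ, hτσ⟩ := h σ
  refine ⟨Function.update τ a (σ a), hST τ hτ _, fun i hi => ?_⟩
  obtain rfl | hia := eq_or_ne i a
  · exact Function.update_self ..
  · rw [Function.update_of_ne hia, hτσ i (Finset.mem_of_mem_insert_of_ne hi hia)]

lemma eq_of_mem_image_update {S : Finset (ι → κ)} {s : Finset ι} {a : ι}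
    (hS : ∀ σ ∈ S, ∀ τ ∈ S, ∀ i ∉ insert a s, σ i = τ i) (c : κ) :
    ∀ σ ∈ S.image fun σ => Function.update σ a c, ∀ τ ∈ S.image fun σ => Function.update σ a c,
      ∀ i ∉ s, σ i = τ i := by
  simp only [Finset.forall_mem_image]
  intro σ hσ τ hτ i hi
  obtain rfl | hia := eq_or_ne i a
  · simp
  · simpa [hia] using hS σ hσ τ hτ i (by simp [hia, hi])

variable [Fintype κ]

lemma card_filter_update_eq_le {q : ℕ} (hq : Fintype.card κ ≤ q + 1) (S : Finset (ι → κ)) (a : ι)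
    (c : κ) (τ : ι → κ) :
    (S.filter fun σ => Function.update σ a c = τ).card ≤
      q + if ∀ b, Function.update τ a b ∈ S then 1 else 0 := by
  set fiber := S.filter fun σ => Function.update σ a c = τ
  have update_eq {σ : ι → κ} (hσ : σ ∈ fiber) : Function.update τ a (σ a) = σ := by
    rw [← (Finset.mem_filter.1 hσ).2, Function.update_idem, Function.update_eq_self]
  have injOn : Set.InjOn (fun σ : ι → κ => σ a) fiber := fun σ hσ ρ hρ h => by
    rw [← update_eq hσ, ← update_eq hρ, show σ a = ρ a from h]
  have card_image : (fiber.image fun σ => σ a).card = fiber.card := Finset.card_image_of_injOn injOn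
  split_ifs with h
  · exact card_image ▸ (Finset.card_le_univ _).trans hq
  · obtain ⟨b, hb⟩ := not_forall.1 h
    have hb' : b ∉ fiber.image fun σ => σ a := fun hmem => by
      obtain ⟨σ, hσ, rfl⟩ := Finset.mem_image.1 hmem
      exact hb ((update_eq hσ).symm ▸ (Finset.mem_filter.1 hσ).1)
    have := Finset.card_lt_univ_of_notMem hb'
    omega

lemma card_le_mul_card_image_update_add {q : ℕ} (hq : Fintype.card κ ≤ q + 1)
    (S : Finset (ι → κ)) (a : ι) (c : κ) :
    S.card ≤ q * (S.image fun σ => Function.update σ a c).card +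
      ((S.image fun σ => Function.update σ a c).filter
        fun τ => ∀ b, Function.update τ a b ∈ S).card := by
  rw [Finset.card_eq_sum_card_image fun σ => Function.update σ a c]
  refine (Finset.sum_le_sum fun τ _ => card_filter_update_eq_le hq S a c τ).trans_eq ?_
  rw [Finset.sum_add_distrib, Finset.sum_const, smul_eq_mul, mul_comm, Finset.card_filter]

/-- Pajor's inequality, for an alphabet of `q + 1` letters. -/
lemma card_le_sum_shatters {q : ℕ} (hq : Fintype.card κ ≤ q + 1) (s : Finset ι)
    (S : Finset (ι → κ)) (hS : ∀ σ ∈ S, ∀ τ ∈ S, ∀ i ∉ s, σ i = τ i) :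
    S.card ≤ ∑ I ∈ s.powerset with Shatters S I, q ^ (s.card - I.card) := by
  induction s using Finset.induction_on generalizing S with
  | empty =>
    obtain rfl | ⟨σ, hσ⟩ := S.eq_empty_or_nonempty
    · simp
    · have hshat : Shatters S ∅ := fun _ => ⟨σ, hσ, by simp⟩
      have hcard : S.card ≤ 1 := Finset.card_le_one.2 fun σ hσ τ hτ =>
        funext fun i => hS σ hσ τ hτ i (Finset.notMem_empty i)
      simpa [Finset.filter_singleton, hshat] using hcard
  | insert a s ha ih =>
    obtain rfl | ⟨σ₀, -⟩ := S.eq_empty_or_nonempty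
    · simp
    set A := S.image fun σ => Function.update σ a (σ₀ a)
    set B := A.filter fun τ => ∀ b, Function.update τ a b ∈ S
    have hA : ∀ σ ∈ A, ∀ τ ∈ A, ∀ i ∉ s, σ i = τ i := eq_of_mem_image_update hS (σ₀ a)
    have hB : ∀ σ ∈ B, ∀ τ ∈ B, ∀ i ∉ s, σ i = τ i := fun σ hσ τ hτ =>
      hA σ (Finset.mem_of_mem_filter _ hσ) τ (Finset.mem_of_mem_filter _ hτ)
    simp only [Finset.sum_filter] at ih ⊢
    rw [Finset.sum_powerset_insert ha]
    calc S.card ≤ q * A.card + B.card := card_le_mul_card_image_update_add hq S a (σ₀ a)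
      _ ≤ q * (∑ I ∈ s.powerset, if Shatters A I then q ^ (s.card - I.card) else 0) +
          ∑ I ∈ s.powerset, if Shatters B I then q ^ (s.card - I.card) else 0 := by
        gcongr
        exacts [ih A hA, ih B hB]
      _ ≤ _ := by
        rw [Finset.mul_sum]
        gcongr with I hI I hI
        · have hIs := Finset.mem_powerset.1 hI
          have := Finset.card_le_card hIs
          by_cases h : Shatters A I
          · rw [if_pos h, if_pos (h.of_image_update fun haI => ha (hIs haI)), ← pow_succ',
              Finset.card_insert_of_notMem ha, Nat.sub_add_comm this]
          · simp [h]
        · have hIs := Finset.mem_powerset.1 hI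
          by_cases h : Shatters B I
          · rw [if_pos h, if_pos (h.insert_of_forall_update_mem fun τ hτ =>
              (Finset.mem_filter.1 hτ).2), Finset.card_insert_of_notMem ha,
              Finset.card_insert_of_notMem fun haI => ha (hIs haI), Nat.add_sub_add_right]
          · simp [h]

lemma card_le_of_forall_shatters_card_le [Fintype ι] {q m : ℕ} (hq : Fintype.card κ ≤ q + 1)
    {t : ℝ} (ht : 0 < t) (ht1 : t ≤ 1) {S : Finset (ι → κ)}
    (hS : ∀ I, Shatters S I → I.card ≤ m) :
    (S.card : ℝ) ≤ (q + t) ^ Fintype.card ι * t⁻¹ ^ m := by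
  have one_le {I : Finset ι} (hI : Shatters S I) : 1 ≤ t⁻¹ ^ m * t ^ I.card := by
    rw [inv_pow, ← div_eq_inv_mul, one_le_div (by positivity)]
    exact pow_le_pow_of_le_one ht.le ht1 (hS I hI)
  calc (S.card : ℝ)
      ≤ ∑ I with Shatters S I, (q : ℝ) ^ (Fintype.card ι - I.card) := by
        exact_mod_cast card_le_sum_shatters hq Finset.univ S (by simp)
    _ ≤ ∑ I with Shatters S I, t⁻¹ ^ m * (t ^ I.card * q ^ (Fintype.card ι - I.card)) := by
        refine Finset.sum_le_sum fun I hI => ?_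
        rw [← mul_assoc]
        exact le_mul_of_one_le_left (by positivity) (one_le (Finset.mem_filter.1 hI).2)
    _ ≤ ∑ I : Finset ι, t⁻¹ ^ m * (t ^ I.card * q ^ (Fintype.card ι - I.card)) :=
        Finset.sum_le_univ_sum_of_nonneg fun I => by positivity
    _ = (q + t) ^ Fintype.card ι * t⁻¹ ^ m := by
        rw [← Finset.mul_sum, Fintype.sum_pow_mul_eq_add_pow, add_comm, mul_comm]

lemma exists_shatters_mul_card_le (κ : Type*) [Fintype κ] [Nonempty κ] {θ : ℝ}
    (hθ : (Fintype.card κ : ℝ) - 1 < θ) :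
    ∃ c : ℝ, 0 < c ∧ ∀ {ι : Type*} [Fintype ι] (S : Finset (ι → κ)),
      θ ^ Fintype.card ι ≤ S.card → ∃ I, Shatters S I ∧ c * Fintype.card ι ≤ I.card := by
  obtain ⟨q, hq⟩ : ∃ q, Fintype.card κ = q + 1 := Nat.exists_eq_add_one.2 Fintype.card_pos
  replace hθ : (q : ℝ) < θ := by simpa [hq] using hθ
  obtain ⟨t, ht, htlt⟩ : ∃ t : ℝ, 0 < t ∧ t < min 1 (θ - q) :=
    exists_between (lt_min one_pos (sub_pos.2 hθ))
  obtain ⟨ht1, htθ⟩ := lt_min_iff.1 htlt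
  have hqt : 0 < q + t := by positivity
  have hθ0 : 0 < θ := by linarith
  have hlogt : 0 < Real.log t⁻¹ := Real.log_pos ((one_lt_inv₀ ht).2 ht1)
  have hlogθ : 0 < Real.log (θ / (q + t)) := Real.log_pos ((one_lt_div hqt).2 (by linarith))
  refine ⟨Real.log (θ / (q + t)) / Real.log t⁻¹, by positivity, fun {ι} _ S hS => ?_⟩
  obtain ⟨σ, hσ⟩ : S.Nonempty := by
    rw [← Finset.card_pos]
    exact_mod_cast (pow_pos hθ0 _).trans_le hS
  obtain ⟨I, hI, hmax⟩ := Finset.exists_max_image (Finset.univ.filter (Shatters S)) Finset.card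
    ⟨∅, Finset.mem_filter.2 ⟨Finset.mem_univ _, fun _ => ⟨σ, hσ, by simp⟩⟩⟩
  simp only [Finset.mem_filter, Finset.mem_univ, true_and] at hI hmax
  refine ⟨I, hI, ?_⟩
  have hpow : (θ / (q + t)) ^ Fintype.card ι ≤ t⁻¹ ^ I.card := by
    rw [div_pow, div_le_iff₀' (by positivity)]
    exact hS.trans (card_le_of_forall_shatters_card_le hq.le ht ht1.le hmax)
  have hlog := Real.log_le_log (by positivity) hpow
  rw [Real.log_pow, Real.log_pow, mul_comm] at hlog
  rwa [div_mul_eq_mul_div, div_le_iff₀ hlogt]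

end Shattering

section Folner

open Filter Topology

variable {G : Type*} [Group G]

lemma FolnerInv.mono {K L F : Finset G} {δ ε : ℝ} (hF : FolnerInv L ε F) (hKL : K ⊆ L)
    (hεδ : ε ≤ δ) : FolnerInv K δ F := by
  refine ⟨hF.1, ?_⟩
  calc (1 - δ) * (F.card : ℝ) ≤ (1 - ε) * F.card := by gcongr
    _ ≤ ((F : Set G) ∩ {s | ∀ g ∈ L, g * s ∈ F}).ncard := hF.2
    _ ≤ ((F : Set G) ∩ {s | ∀ g ∈ K, g * s ∈ F}).ncard := by
      gcongr
      exact F.finite_toSet.inter_of_left _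

variable (G) in
/-- The filter of finite subsets of `G` that become more and more invariant: the sets of all
`(K, δ)`-invariant finite sets, for finite `K` and `δ > 0`, form a basis of it. -/
def folnerFilter : Filter (Finset G) :=
  ⨅ p ∈ {p : Finset G × ℝ | 0 < p.2}, 𝓟 {F | FolnerInv p.1 p.2 F}

lemma hasBasis_folnerFilter : (folnerFilter G).HasBasis (fun p : Finset G × ℝ => 0 < p.2)
    fun p => {F | FolnerInv p.1 p.2 F} := by
  refine hasBasis_biInf_principal ?_ ⟨(∅, 1), one_pos (α := ℝ)⟩
  rintro ⟨K, δ⟩ (hδ : 0 < δ) ⟨L, ε⟩ (hε : 0 < ε)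
  exact ⟨(K ∪ L, min δ ε), lt_min hδ hε,
    fun F (hF : FolnerInv _ _ F) => hF.mono Finset.subset_union_left (min_le_left _ _),
    fun F (hF : FolnerInv _ _ F) => hF.mono Finset.subset_union_right (min_le_right _ _)⟩

lemma eventually_folnerInv (K : Finset G) {δ : ℝ} (hδ : 0 < δ) :
    ∀ᶠ F in folnerFilter G, FolnerInv K δ F :=
  hasBasis_folnerFilter.mem_of_mem (i := (K, δ)) hδ

lemma eventually_folnerFilter_nonempty : ∀ᶠ F in folnerFilter G, F.Nonempty :=
  (eventually_folnerInv ∅ one_pos).mono fun _ hF => hF.1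

lemma frequently_folnerFilter {p : Finset G → Prop} : (∃ᶠ F in folnerFilter G, p F) ↔
    ∀ (K : Finset G) (δ : ℝ), 0 < δ → ∃ F, FolnerInv K δ F ∧ p F := by
  simp only [hasBasis_folnerFilter.frequently_iff, Prod.forall, mem_ofPred_eq]

lemma invLimsup_le_sSup {ψ : Finset G → ℝ} (hψ : 0 ≤ ψ) (K : Finset G) {δ : ℝ} (hδ : 0 < δ) :
    invLimsup ψ ≤ sSup ((fun F : Finset G => ψ F / (F.card : ℝ)) '' {F | FolnerInv K δ F}) := by
  have sSup_nonneg (L : Finset G) (ε : {d : ℝ // 0 < d}) :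
      0 ≤ sSup ((fun F : Finset G => ψ F / (F.card : ℝ)) '' {F | FolnerInv L ε.1 F}) :=
    Real.sSup_nonneg <| forall_mem_image.2 fun F _ => div_nonneg (hψ F) F.card.cast_nonneg
  calc invLimsup ψ
      ≤ ⨅ ε : {d : ℝ // 0 < d},
          sSup ((fun F : Finset G => ψ F / (F.card : ℝ)) '' {F | FolnerInv K ε.1 F}) :=
        ciInf_le ⟨0, forall_mem_range.2 fun L => Real.iInf_nonneg (sSup_nonneg L)⟩ K
    _ ≤ _ := ciInf_le ⟨0, forall_mem_range.2 (sSup_nonneg K)⟩ (⟨δ, hδ⟩ : {d : ℝ // 0 < d})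

lemma frequently_lt_of_lt_invLimsup (hG : FolnerAmenable G) {ψ : Finset G → ℝ} (hψ : 0 ≤ ψ)
    {c : ℝ} (hc : c < invLimsup ψ) : ∃ᶠ F in folnerFilter G, c * F.card < ψ F := by
  refine frequently_folnerFilter.2 fun K δ hδ => ?_
  obtain ⟨_, ⟨F, hF, rfl⟩, hcF⟩ := exists_lt_of_lt_csSup (Set.Nonempty.image _ (hG K δ hδ))
    (hc.trans_le (invLimsup_le_sSup hψ K hδ))
  exact ⟨F, hF, (lt_div_iff₀ (by exact_mod_cast hF.1.card_pos)).1 hcF⟩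

lemma le_invLimsup_of_frequently_le {ψ : Finset G → ℝ} (hψ : ∀ F, ψ F ≤ F.card) {c : ℝ}
    (hc : ∃ᶠ F in folnerFilter G, c * F.card ≤ ψ F) : c ≤ invLimsup ψ := by
  have : Nonempty {d : ℝ // 0 < d} := ⟨⟨1, one_pos⟩⟩
  refine le_ciInf fun K => le_ciInf fun δ => ?_
  obtain ⟨F, hF, hcF⟩ := frequently_folnerFilter.1 hc K δ.1 δ.2
  exact le_csSup_of_le
    ⟨1, forall_mem_image.2 fun E _ => div_le_one_of_le₀ (hψ E) E.card.cast_nonneg⟩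
    (mem_image_of_mem _ hF) ((le_div_iff₀ (by exact_mod_cast hF.1.card_pos)).2 hcF)

lemma invLimsup_le_one {ψ : Finset G → ℝ} (hψ₀ : 0 ≤ ψ) (hψ : ∀ F, ψ F ≤ F.card) :
    invLimsup ψ ≤ 1 :=
  (invLimsup_le_sSup hψ₀ ∅ one_pos).trans <| Real.sSup_le
    (forall_mem_image.2 fun F _ => div_le_one_of_le₀ (hψ F) F.card.cast_nonneg) zero_le_one

lemma FolnerInv.card_map_mulLeft_sdiff_le {K F : Finset G} {δ : ℝ} (hF : FolnerInv K δ F) {g : G}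
    (hg : g ∈ K) : ((F.map (mulLeftEmbedding g) \ F).card : ℝ) ≤ δ * F.card := by
  have card_sdiff :
      (F.map (mulLeftEmbedding g) \ F).card = (F.filter fun t => g * t ∉ F).card := by
    rw [Finset.sdiff_eq_filter, Finset.filter_map, Finset.card_map]
    rfl
  have ncard_le : ((F : Set G) ∩ {s | ∀ g ∈ K, g * s ∈ F}).ncard ≤
      (F.filter fun t => g * t ∈ F).card := by
    rw [← Set.ncard_coe_finset]
    exact Set.ncard_le_ncard (fun t ht => by simpa using ⟨ht.1, ht.2 g hg⟩) (Finset.finite_toSet _)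
  have card_add := Finset.card_filter_add_card_filter_not (s := F) fun t => g * t ∈ F
  have := hF.2
  rify at ncard_le card_add
  rw [card_sdiff]
  linarith

lemma FolnerInv.abs_sum_mul_left_sub_sum_le {K F : Finset G} {δ M : ℝ} (hF : FolnerInv K δ F)
    {g : G} (hg : g ∈ K) {e : G → ℝ} (he : ∀ t, |e t| ≤ M) :
    |∑ t ∈ F, e (g * t) - ∑ t ∈ F, e t| ≤ 2 * M * (δ * F.card) := by
  set gF := F.map (mulLeftEmbedding g)
  have abs_sum_le (E : Finset G) : |∑ t ∈ E, e t| ≤ E.card * M := by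
    rw [← nsmul_eq_mul]
    exact (Finset.abs_sum_le_sum_abs e E).trans (Finset.sum_le_card_nsmul E _ M fun t _ => he t)
  have hM : 0 ≤ M := (abs_nonneg _).trans (he 1)
  calc |∑ t ∈ F, e (g * t) - ∑ t ∈ F, e t|
      = |∑ t ∈ gF \ F, e t - ∑ t ∈ F \ gF, e t| := by
        rw [Finset.sum_sdiff_sub_sum_sdiff, Finset.sum_map]; rfl
    _ ≤ (gF \ F).card * M + (F \ gF).card * M :=
        (abs_sub _ _).trans (add_le_add (abs_sum_le _) (abs_sum_le _))
    _ = 2 * M * (gF \ F).card := by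
        rw [Finset.card_sdiff_comm (s := F) (t := gF) (Finset.card_map _).symm]
        ring
    _ ≤ 2 * M * (δ * F.card) := by
        gcongr
        exact hF.card_map_mulLeft_sdiff_le hg

lemma tendsto_average_mul_left_sub_average {ι : Type*} {l : Filter ι} {F : ι → Finset G}
    (hF : Tendsto F l (folnerFilter G)) (g : G) {e : ι → G → ℝ} {M : ℝ}
    (he : ∀ i t, |e i t| ≤ M) :
    Tendsto (fun i => ((F i).card : ℝ)⁻¹ * ∑ t ∈ F i, e i (g * t) -
      ((F i).card : ℝ)⁻¹ * ∑ t ∈ F i, e i t) l (𝓝 0) := by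
  refine Metric.tendsto_nhds.2 fun ε hε => ?_
  obtain ⟨δ, hδ, hδε⟩ : ∃ δ : ℝ, 0 < δ ∧ 2 * M * δ < ε :=
    (((continuous_const_mul (2 * M)).tendsto' 0 0 (mul_zero _)).eventually_lt_const hε).exists_gt
  filter_upwards [hF.eventually (eventually_folnerInv {g} hδ)] with i hi
  have hcard : (0 : ℝ) < (F i).card := by exact_mod_cast hi.1.card_pos
  rw [dist_zero_right, Real.norm_eq_abs, ← mul_sub, abs_mul, abs_of_pos (inv_pos.2 hcard)]
  calc _ ≤ ((F i).card : ℝ)⁻¹ * (2 * M * (δ * (F i).card)) := by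
        gcongr
        exact hi.abs_sum_mul_left_sub_sum_le (Finset.mem_singleton_self g) (he i)
    _ = 2 * M * δ := by field_simp
    _ < ε := hδε

end Folner

section IndependenceSets

variable {G X : Type*} [Group G] [MulAction G X] {k : ℕ} {A B : Fin k → Set X}

lemma IndepRel.mono {D E : G → Set X} {I J : Set G} (h : IndepRel A D J) (hAB : ∀ i, A i ⊆ B i)
    (hDE : ∀ s, D s ⊆ E s) (hIJ : I ⊆ J) : IndepRel B E I := fun F hF hne σ =>
  (h F (hF.trans hIJ) hne σ).mono <| iInter₂_mono fun s _ =>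
    inter_subset_inter (hDE s) (preimage_mono (hAB _))

lemma indepRel_empty (A : Fin k → Set X) (D : G → Set X) : IndepRel A D (∅ : Set G) :=
  fun _ hF hne => absurd (subset_empty_iff.1 hF) (Finset.coe_nonempty.2 hne).ne_empty

lemma IndepSet.exists_mem {D : Set X} {I : Finset G} (h : IndepSet A D (I : Set G))
    (hI : I.Nonempty) (σ : I → Fin k) : ∃ x ∈ D, ∀ s : I, (s : G) • x ∈ A (σ s) := by
  obtain ⟨s₀, hs₀⟩ := hI
  obtain ⟨x, hx⟩ := h I subset_rfl ⟨s₀, hs₀⟩ fun s => if hs : s ∈ I then σ ⟨s, hs⟩ else σ ⟨s₀, hs₀⟩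
  rw [mem_iInter₂] at hx
  exact ⟨x, (hx s₀ hs₀).1, fun s => by simpa using (hx s s.2).2⟩

lemma card_mem_upperBounds_ncard_inter (A : Fin k → Set X) (D : G → Set X) (F : Finset G) : F.card ∈
    upperBounds {m : ℕ | ∃ J : Set G, IndepRel A D J ∧ m = ((F : Set G) ∩ J).ncard} := by
  rintro m ⟨J, -, rfl⟩
  rw [← Set.ncard_coe_finset]
  exact Set.ncard_le_ncard inter_subset_left F.finite_toSet

lemma maxIndep_le_card (A : Fin k → Set X) (D : G → Set X) (F : Finset G) :
    maxIndep A D F ≤ F.card :=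
  csSup_le' (card_mem_upperBounds_ncard_inter A D F)

lemma IndepRel.ncard_inter_le_maxIndep {D : G → Set X} {J : Set G} (hJ : IndepRel A D J)
    (F : Finset G) : ((F : Set G) ∩ J).ncard ≤ maxIndep A D F :=
  le_csSup ⟨_, card_mem_upperBounds_ncard_inter A D F⟩ ⟨J, hJ, rfl⟩

lemma IndepRel.card_le_maxIndep {D : G → Set X} {F I : Finset G} (hI : IndepRel A D (I : Set G))
    (hIF : I ⊆ F) : I.card ≤ maxIndep A D F := by
  simpa [inter_eq_right.2 (Finset.coe_subset.2 hIF)] using hI.ncard_inter_le_maxIndep F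

lemma exists_indepRel_card_eq_maxIndep (A : Fin k → Set X) (D : G → Set X) (F : Finset G) :
    ∃ I ⊆ F, IndepRel A D (I : Set G) ∧ I.card = maxIndep A D F := by
  obtain ⟨J, hJ, hcard⟩ : maxIndep A D F ∈
      {m : ℕ | ∃ J : Set G, IndepRel A D J ∧ m = ((F : Set G) ∩ J).ncard} :=
    Nat.sSup_mem ⟨_, ∅, indepRel_empty A D, rfl⟩ ⟨_, card_mem_upperBounds_ncard_inter A D F⟩
  have coe_filter : (F.filter (· ∈ J) : Set G) = (F : Set G) ∩ J := Finset.coe_filter ..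
  refine ⟨F.filter (· ∈ J), Finset.filter_subset _ _, ?_, ?_⟩
  · exact hJ.mono (fun _ => subset_rfl) (fun _ => subset_rfl) (coe_filter ▸ inter_subset_right)
  · rw [hcard, ← coe_filter, Set.ncard_coe_finset]

lemma maxIndep_mono {D E : G → Set X} (hAB : ∀ i, A i ⊆ B i) (hDE : ∀ s, D s ⊆ E s)
    (F : Finset G) : maxIndep A D F ≤ maxIndep B E F := by
  obtain ⟨I, hIF, hI, hcard⟩ := exists_indepRel_card_eq_maxIndep A D F
  exact hcard ▸ (hI.mono hAB hDE subset_rfl).card_le_maxIndep hIF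

lemma isIETuple_iff_frequently [TopologicalSpace X] {x : Fin k → X} :
    IsIETuple G x ↔ ∀ U : Fin k → Set X, (∀ i, U i ∈ nhds (x i)) → ∃ d : ℝ, 0 < d ∧
      ∃ᶠ F in folnerFilter G, d * F.card ≤ maxIndep U (fun _ : G => univ) F := by
  simp only [frequently_folnerFilter]
  refine forall₂_congr fun U _ => exists_congr fun d => and_congr_right fun _ =>
    forall₃_congr fun K δ _ => exists_congr fun F => ?_
  constructor
  · rintro ⟨J, hF, hJ, hd⟩
    exact ⟨hF, hd.trans (by exact_mod_cast hJ.ncard_inter_le_maxIndep F)⟩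
  · rintro ⟨hF, hd⟩
    obtain ⟨I, hIF, hI, hcard⟩ := exists_indepRel_card_eq_maxIndep U (fun _ : G => univ) F
    refine ⟨I, hF, hI, ?_⟩
    rwa [inter_eq_right.2 (Finset.coe_subset.2 hIF), Set.ncard_coe_finset, hcard]

end IndependenceSets

section IndependenceDensity

variable {G X : Type*} [Group G] [MulAction G X] [MeasurableSpace X] {μ : Measure X} {k : ℕ}
  {A B : Fin k → Set X} {δ : ℝ}

lemma phiConst_le_maxIndep {D : Set X} (hD : MeasurableSet D) (hμD : 1 - δ ≤ μ.real D)
    (A : Fin k → Set X) (F : Finset G) : phiConst μ A δ F ≤ maxIndep A (fun _ : G => D) F :=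
  Nat.sInf_le ⟨D, hD, hμD, rfl⟩

variable [IsProbabilityMeasure μ]

lemma phiConst_le_maxIndep_univ (hδ : 0 ≤ δ) (A : Fin k → Set X) (F : Finset G) :
    phiConst μ A δ F ≤ maxIndep A (fun _ : G => univ) F :=
  phiConst_le_maxIndep .univ (by simpa using hδ) A F

lemma phiConst_le_card (hδ : 0 ≤ δ) (A : Fin k → Set X) (F : Finset G) :
    phiConst μ A δ F ≤ F.card :=
  (phiConst_le_maxIndep_univ hδ A F).trans (maxIndep_le_card A _ F)

lemma exists_maxIndep_eq_phiConst (hδ : 0 ≤ δ) (A : Fin k → Set X) (F : Finset G) :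
    ∃ D, MeasurableSet D ∧ 1 - δ ≤ μ.real D ∧
      maxIndep A (fun _ : G => D) F = phiConst μ A δ F := by
  obtain ⟨D, hD, hμD, h⟩ : phiConst μ A δ F ∈ {m : ℕ | ∃ D : Set X, MeasurableSet D ∧
      1 - δ ≤ (μ D).toReal ∧ m = maxIndep A (fun _ : G => D) F} :=
    Nat.sInf_mem ⟨_, univ, .univ, by simpa using hδ, rfl⟩
  exact ⟨D, hD, hμD, h.symm⟩

lemma phiConst_mono (hδ : 0 ≤ δ) (hAB : ∀ i, A i ⊆ B i) (F : Finset G) :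
    phiConst μ A δ F ≤ phiConst μ B δ F := by
  obtain ⟨D, hD, hμD, h⟩ := exists_maxIndep_eq_phiConst (μ := μ) hδ B F
  exact h ▸ (phiConst_le_maxIndep hD hμD A F).trans (maxIndep_mono hAB (fun _ => subset_rfl) F)

lemma upperIndepDens_pos_of_frequently (hδ : 0 < δ) {c : ℝ} (hc : 0 < c)
    (h : ∃ᶠ F in folnerFilter G, c * F.card ≤ phiConst μ A δ F) : 0 < upperIndepDens G μ A := by
  have phi_le (ε : {d : ℝ // 0 < d}) (F : Finset G) : (phiConst μ A ε.1 F : ℝ) ≤ F.card := by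
    exact_mod_cast phiConst_le_card ε.2.le A F
  calc 0 < c := hc
    _ ≤ invLimsup fun F : Finset G => (phiConst μ A δ F : ℝ) :=
      le_invLimsup_of_frequently_le (phi_le ⟨δ, hδ⟩) h
    _ ≤ upperIndepDens G μ A :=
      le_ciSup (f := fun ε : {d : ℝ // 0 < d} => invLimsup fun F => (phiConst μ A ε.1 F : ℝ))
        ⟨1, forall_mem_range.2 fun ε => invLimsup_le_one (fun _ => Nat.cast_nonneg _) (phi_le ε)⟩
        ⟨δ, hδ⟩

lemma upperIndepDens_pos_iff_frequently (hG : FolnerAmenable G) : 0 < upperIndepDens G μ A ↔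
    ∃ δ : ℝ, 0 < δ ∧ ∃ c : ℝ, 0 < c ∧ ∃ᶠ F in folnerFilter G, c * F.card ≤ phiConst μ A δ F := by
  refine ⟨fun h => ?_, fun ⟨δ, hδ, c, hc, hfreq⟩ => upperIndepDens_pos_of_frequently hδ hc hfreq⟩
  have : Nonempty {d : ℝ // 0 < d} := ⟨⟨1, one_pos⟩⟩
  obtain ⟨⟨δ, hδ⟩, h⟩ := exists_lt_of_lt_ciSup h
  obtain ⟨c, hc, hcδ⟩ := exists_between h
  exact ⟨δ, hδ, c, hc,
    (frequently_lt_of_lt_invLimsup hG (fun _ => Nat.cast_nonneg _) hcδ).mono fun _ => le_of_lt⟩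

lemma upperIndepDens_pos_mono (hG : FolnerAmenable G) (hAB : ∀ i, A i ⊆ B i)
    (h : 0 < upperIndepDens G μ A) : 0 < upperIndepDens G μ B := by
  obtain ⟨δ, hδ, c, hc, hfreq⟩ := (upperIndepDens_pos_iff_frequently hG).1 h
  refine upperIndepDens_pos_of_frequently hδ hc (hfreq.mono fun F hF => hF.trans ?_)
  exact_mod_cast phiConst_mono hδ.le hAB F

lemma nonempty_of_upperIndepDens_pos (hG : FolnerAmenable G) (h : 0 < upperIndepDens G μ A)
    (i : Fin k) : (A i).Nonempty := by
  obtain ⟨δ, hδ, c, hc, hfreq⟩ := (upperIndepDens_pos_iff_frequently hG).1 h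
  obtain ⟨F, hF, hFne⟩ := (hfreq.and_eventually eventually_folnerFilter_nonempty).exists
  obtain ⟨I, -, hI, hcard⟩ := exists_indepRel_card_eq_maxIndep A (fun _ : G => univ) F
  have hIne : I.Nonempty := by
    have hpos : 0 < c * F.card := mul_pos hc (by exact_mod_cast hFne.card_pos)
    rw [← Finset.card_pos, hcard]
    exact (Nat.cast_pos.1 (hpos.trans_le hF)).trans_le (phiConst_le_maxIndep_univ hδ.le A F)
  obtain ⟨x, -, hx⟩ := IndepSet.exists_mem hI hIne fun _ => i
  obtain ⟨s, hs⟩ := hIne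
  exact ⟨_, hx ⟨s, hs⟩⟩

end IndependenceDensity

section PartitionRegularity

variable {G X : Type*} [Group G] [MulAction G X] {k : ℕ}

/-- The itineraries along `J` of the points of `D`: the patterns `σ : J → Fin k` such that some
point `x ∈ D` has `s • x ∈ B s (σ s)` for all `s ∈ J`. The sets in the tuple `B s` need not be
disjoint, so a point may have many itineraries, or none. -/
noncomputable def itineraries (J : Finset G) (B : J → Fin k → Set X) (D : Set X) :
    Finset (J → Fin k) :=
  Finset.univ.filter fun σ => ∃ x ∈ D, ∀ s : J, (s : G) • x ∈ B s (σ s)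

lemma mem_itineraries {J : Finset G} {B : J → Fin k → Set X} {D : Set X} {σ : J → Fin k} :
    σ ∈ itineraries J B D ↔ ∃ x ∈ D, ∀ s : J, (s : G) • x ∈ B s (σ s) :=
  Finset.mem_filter_univ σ

lemma Shatters.mono {ι κ : Type*} {S : Finset (ι → κ)} {I J : Finset ι} (h : Shatters S J)
    (hIJ : I ⊆ J) : Shatters S I := fun σ =>
  let ⟨τ, hτ, hτσ⟩ := h σ
  ⟨τ, hτ, fun i hi => hτσ i (hIJ hi)⟩

lemma Shatters.indepSet {J : Finset G} {B : J → Fin k → Set X} {D : Set X} {I : Finset J}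
    (h : Shatters (itineraries J B D) I) {A : Fin k → Set X} (hB : ∀ s ∈ I, B s = A) :
    IndepSet A D (I.map (.subtype _) : Set G) := by
  intro F hF _ σ
  obtain ⟨τ, hτ, hτσ⟩ := h fun s => σ s
  obtain ⟨x, hxD, hx⟩ := mem_itineraries.1 hτ
  refine ⟨x, mem_iInter₂.2 fun s hs => ⟨hxD, ?_⟩⟩
  obtain ⟨t, ht, rfl⟩ := Finset.mem_map.1 (hF hs)
  have hxt := hx t
  rwa [hB t ht, hτσ t ht] at hxt

lemma sum_prod_ite_eq {ι κ : Type*} [Fintype ι] [DecidableEq ι] [Fintype κ] (a : κ) :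
    ∑ σ : ι → κ, ∏ s, (if σ s = a then (1 : ℝ) else 2) =
      2 ^ Fintype.card ι * (Fintype.card κ - 1 / 2) ^ Fintype.card ι := by
  have sum_ite : ∑ b : κ, (if b = a then (1 : ℝ) else 2) = 2 * (Fintype.card κ - 1 / 2) := by
    have (b : κ) : (if b = a then (1 : ℝ) else 2) = 2 - if b = a then 1 else 0 := by
      split_ifs <;> norm_num
    simp only [this, Finset.sum_sub_distrib, Finset.sum_const, Finset.card_univ, nsmul_eq_mul,
      Finset.sum_ite_eq', Finset.mem_univ, if_true]
    ring
  rw [← mul_pow, ← sum_ite, ← Fintype.piFinset_univ,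
    Finset.sum_prod_piFinset Finset.univ fun (_ : ι) b => if b = a then (1 : ℝ) else 2,
    Finset.prod_const, Finset.card_univ]

lemma exists_pow_le_card_filter {ι κ : Type*} [Fintype ι] [DecidableEq ι] [Fintype κ]
    (a : κ) (R : (ι → Bool) → (ι → κ) → Prop)
    (hR : ∀ σ, ∃ ε : ι → Bool, ∀ r, (∀ s, σ s = a → r s = ε s) → R r σ) :
    ∃ r, ((Fintype.card κ : ℝ) - 1 / 2) ^ Fintype.card ι ≤
      (Finset.univ.filter (R r)).card := by
  have prod_le_card (σ : ι → κ) : ∏ s, (if σ s = a then 1 else 2) ≤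
      (Finset.univ.filter fun r => R r σ).card := by
    obtain ⟨ε, hε⟩ := hR σ
    have card_agreeing : (Fintype.piFinset fun s => if σ s = a then {ε s} else Finset.univ).card =
        ∏ s, (if σ s = a then 1 else 2) := by
      rw [Fintype.card_piFinset]
      exact Finset.prod_congr rfl fun s _ => by split_ifs <;> rfl
    rw [← card_agreeing]
    refine Finset.card_le_card fun r hr => Finset.mem_filter.2 ⟨Finset.mem_univ r, hε r ?_⟩
    intro s hs
    simpa [hs] using Fintype.mem_piFinset.1 hr s
  suffices h : ∑ r : ι → Bool, ((Fintype.card κ : ℝ) - 1 / 2) ^ Fintype.card ι ≤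
      ∑ r : ι → Bool, ((Finset.univ.filter (R r)).card : ℝ) by
    obtain ⟨r, -, hr⟩ := Finset.exists_le_of_sum_le Finset.univ_nonempty h
    exact ⟨r, hr⟩
  calc ∑ r : ι → Bool, ((Fintype.card κ : ℝ) - 1 / 2) ^ Fintype.card ι
      = ∑ σ : ι → κ, ∏ s, (if σ s = a then (1 : ℝ) else 2) := by
        rw [sum_prod_ite_eq]
        simp
    _ ≤ ∑ σ : ι → κ, ((Finset.univ.filter fun r => R r σ).card : ℝ) := by
        gcongr with σ
        exact_mod_cast prod_le_card σ
    _ = ∑ r : ι → Bool, ((Finset.univ.filter (R r)).card : ℝ) := by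
        exact_mod_cast (Finset.sum_card_bipartiteAbove_eq_sum_card_bipartiteBelow R).symm

variable {A : Fin k → Set X} {i : Fin k} {B C : Set X}

lemma IndepSet.exists_pow_le_card_itineraries {D : Set X} {J : Finset G}
    (h : IndepSet (Function.update A i (B ∪ C)) D (J : Set G)) (hJ : J.Nonempty) :
    ∃ r : J → Bool, ((k : ℝ) - 1 / 2) ^ J.card ≤
      (itineraries J (fun s => Function.update A i (bif r s then B else C)) D).card := by
  have key := exists_pow_le_card_filter (ι := J) i (fun r σ => ∃ x ∈ D, ∀ s : J,
    (s : G) • x ∈ Function.update A i (bif r s then B else C) (σ s)) fun σ => by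
    obtain ⟨x, hxD, hx⟩ := h.exists_mem hJ σ
    refine ⟨fun s => decide ((s : G) • x ∈ B), fun r hr => ⟨x, hxD, fun s => ?_⟩⟩
    have hxs := hx s
    by_cases hs : σ s = i
    · rw [hs, Function.update_self] at hxs
      rw [hs, Function.update_self, hr s hs]
      by_cases hB : (s : G) • x ∈ B
      · simp [hB]
      · simpa [hB] using hxs
    · rwa [Function.update_of_ne hs] at hxs ⊢
  simpa [itineraries] using key

variable (i) in
lemma exists_indepSet_update_of_union : ∃ c : ℝ, 0 < c ∧ ∀ {A : Fin k → Set X} {B C D : Set X}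
    {J : Finset G}, IndepSet (Function.update A i (B ∪ C)) D (J : Set G) →
      ∃ I ⊆ J, c * J.card ≤ I.card ∧ (IndepSet (Function.update A i B) D (I : Set G) ∨
        IndepSet (Function.update A i C) D (I : Set G)) := by
  have : Nonempty (Fin k) := ⟨i⟩
  obtain ⟨c, hc, hshatter⟩ := exists_shatters_mul_card_le (Fin k) (θ := (k : ℝ) - 1 / 2)
    (by rw [Fintype.card_fin]; linarith)
  refine ⟨c / 2, by positivity, fun {A B C D J} hJ => ?_⟩
  rcases J.eq_empty_or_nonempty with rfl | hne
  · exact ⟨∅, subset_rfl, by simp, .inl (Finset.coe_empty ▸ indepRel_empty _ _)⟩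
  obtain ⟨r, hr⟩ := hJ.exists_pow_le_card_itineraries hne
  obtain ⟨I, hI, hcI⟩ := hshatter _ (by rwa [Fintype.card_coe])
  have card_add := Finset.card_filter_add_card_filter_not (s := I) fun s => r s = true
  rw [Fintype.card_coe] at hcI
  rify at card_add
  have map_subset (E : Finset J) : E.map (.subtype _) ⊆ J := fun s hs => by
    obtain ⟨t, -, rfl⟩ := Finset.mem_map.1 hs
    exact t.2
  rcases le_or_gt (c / 2 * J.card) (I.filter fun s => r s = true).card with hle | hlt
  · refine ⟨_, map_subset (I.filter fun s => r s = true), by rwa [Finset.card_map], .inl ?_⟩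
    refine (hI.mono (Finset.filter_subset _ _)).indepSet fun s hs => ?_
    rw [(Finset.mem_filter.1 hs).2, cond_true]
  · refine ⟨_, map_subset (I.filter fun s => ¬r s = true), ?_, .inr ?_⟩
    · rw [Finset.card_map]
      linarith
    · refine (hI.mono (Finset.filter_subset _ _)).indepSet fun s hs => ?_
      rw [Bool.eq_false_of_not_eq_true (Finset.mem_filter.1 hs).2, cond_false]

variable (G X i) in
lemma exists_mul_maxIndep_union_le : ∃ c : ℝ, 0 < c ∧ ∀ (A : Fin k → Set X) (B C D : Set X)
    (F : Finset G), c * maxIndep (Function.update A i (B ∪ C)) (fun _ : G => D) F ≤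
      max (maxIndep (Function.update A i B) (fun _ : G => D) F : ℝ)
        (maxIndep (Function.update A i C) (fun _ : G => D) F) := by
  obtain ⟨c, hc, hsplit⟩ := exists_indepSet_update_of_union (G := G) (X := X) i
  refine ⟨c, hc, fun A B C D F => ?_⟩
  obtain ⟨J, hJF, hJ, hcard⟩ :=
    exists_indepRel_card_eq_maxIndep (Function.update A i (B ∪ C)) (fun _ : G => D) F
  obtain ⟨I, hIJ, hcI, hI⟩ := hsplit hJ
  rw [← hcard]
  refine hcI.trans (le_max_iff.2 ?_)
  exact_mod_cast hI.imp (IndepRel.card_le_maxIndep · (hIJ.trans hJF))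
    (IndepRel.card_le_maxIndep · (hIJ.trans hJF))

variable [MeasurableSpace X] {μ : Measure X} [IsProbabilityMeasure μ]

lemma one_sub_le_measureReal_inter {D E : Set X} (hE : MeasurableSet E) {δ ε : ℝ}
    (hμD : 1 - δ ≤ μ.real D) (hμE : 1 - ε ≤ μ.real E) : 1 - (δ + ε) ≤ μ.real (D ∩ E) := by
  have h_union : μ.real (D ∪ E) ≤ 1 := measureReal_le_one
  linarith [measureReal_union_add_inter (μ := μ) (s := D) hE]

lemma upperIndepDens_pos_union (hG : FolnerAmenable G)
    (h : 0 < upperIndepDens G μ (Function.update A i (B ∪ C))) :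
    0 < upperIndepDens G μ (Function.update A i B) ∨
      0 < upperIndepDens G μ (Function.update A i C) := by
  obtain ⟨δ, hδ, c, hc, hfreq⟩ := (upperIndepDens_pos_iff_frequently hG).1 h
  obtain ⟨c', hc', hunion⟩ := exists_mul_maxIndep_union_le G X i
  suffices h : ∃ᶠ F in folnerFilter G,
      c' * c * F.card ≤ phiConst μ (Function.update A i B) (δ / 2) F ∨
        c' * c * F.card ≤ phiConst μ (Function.update A i C) (δ / 2) F by
    have hδ2 : 0 < δ / 2 := half_pos hδ
    exact (Filter.frequently_or_distrib.1 h).imp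
      (upperIndepDens_pos_of_frequently hδ2 (mul_pos hc' hc))
      (upperIndepDens_pos_of_frequently hδ2 (mul_pos hc' hc))
  refine hfreq.mono fun F hF => le_max_iff.1 ?_
  obtain ⟨D, hD, hμD, hφD⟩ :=
    exists_maxIndep_eq_phiConst (μ := μ) (half_pos hδ).le (Function.update A i B) F
  obtain ⟨E, hE, hμE, hφE⟩ :=
    exists_maxIndep_eq_phiConst (μ := μ) (half_pos hδ).le (Function.update A i C) F
  have hμDE : 1 - δ ≤ μ.real (D ∩ E) := by
    simpa using one_sub_le_measureReal_inter hE hμD hμE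
  calc c' * c * F.card ≤ c' * phiConst μ (Function.update A i (B ∪ C)) δ F := by
        rw [mul_assoc]
        gcongr
    _ ≤ c' * maxIndep (Function.update A i (B ∪ C)) (fun _ : G => D ∩ E) F := by
        gcongr
        exact phiConst_le_maxIndep (hD.inter hE) hμDE _ F
    _ ≤ _ := hunion A B C (D ∩ E) F
    _ ≤ _ := by
        rw [← hφD, ← hφE]
        gcongr
        · exact maxIndep_mono (fun _ => subset_rfl) (fun _ => inter_subset_left) F
        · exact maxIndep_mono (fun _ => subset_rfl) (fun _ => inter_subset_right) F

end PartitionRegularity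

section Localization

open Topology

/-- Partition regularity of a property `P` of tuples of sets: it passes to larger tuples, it forces
the entries to be nonempty, and if an entry is split into two parts then it holds for one of the
two resulting tuples. -/
structure IsPartitionRegular {ι X : Type*} [DecidableEq ι] (P : (ι → Set X) → Prop) :
    Prop where
  mono : ∀ {A B : ι → Set X}, A ≤ B → P A → P B
  nonempty : ∀ {A : ι → Set X}, P A → ∀ i, (A i).Nonempty
  union : ∀ {A : ι → Set X} {i : ι} {B C : Set X}, P (Function.update A i (B ∪ C)) →
    P (Function.update A i B) ∨ P (Function.update A i C)

variable {X : Type*} [TopologicalSpace X]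

lemma exists_mem_forall_nhds_of_union {Q : Set X → Prop} (hmono : ∀ {B C}, B ⊆ C → Q B → Q C)
    (hempty : ¬Q ∅) (hunion : ∀ {B C}, Q (B ∪ C) → Q B ∨ Q C) {K : Set X} (hK : IsCompact K)
    (h : Q K) : ∃ x ∈ K, ∀ V ∈ 𝓝 x, Q V := by
  by_contra! hcon
  refine hK.induction_on (p := fun B => ¬Q B) hempty (fun _ _ hBC => mt (hmono hBC))
    (fun _ _ hB hC hBC => (hunion hBC).elim hB hC) (fun x hx => ?_) h
  obtain ⟨V, hV, hQV⟩ := hcon x hx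
  exact ⟨V, mem_nhdsWithin_of_mem_nhds hV, hQV⟩

variable {ι : Type*} [DecidableEq ι] {P : (ι → Set X) → Prop} {U : ι → Set X}

lemma IsPartitionRegular.exists_mem_forall_update_piecewise (hP : IsPartitionRegular P)
    {s : Finset ι} {j : ι} (hj : j ∉ s) (hU : IsCompact (U j)) {x : ι → X}
    (h : ∀ V : ι → Set X, (∀ i ∈ s, V i ∈ 𝓝 (x i)) → P (s.piecewise V U)) :
    ∃ y ∈ U j, ∀ W ∈ 𝓝 y, ∀ V : ι → Set X, (∀ i ∈ s, V i ∈ 𝓝 (x i)) →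
      P (Function.update (s.piecewise V U) j W) := by
  have update_le {V W : ι → Set X} {B C : Set X} (hVW : V ≤ W) (hBC : B ⊆ C) :
      Function.update (s.piecewise V U) j B ≤ Function.update (s.piecewise W U) j C :=
    update_le_update_iff.2 ⟨hBC, fun i _ => Finset.piecewise_le_piecewise s hVW le_rfl i⟩
  refine exists_mem_forall_nhds_of_union
    (fun hBC hB V hV => hP.mono (update_le le_rfl hBC) (hB V hV)) ?_ ?_ hU fun V hV => ?_
  · intro hempty
    simpa using hP.nonempty (hempty (fun _ => univ) fun _ _ => Filter.univ_mem) j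
  · intro B C hBC
    by_contra! ⟨⟨V, hV, hB⟩, W, hW, hC⟩
    rcases hP.union (hBC (V ⊓ W) fun i hi => Filter.inter_mem (hV i hi) (hW i hi)) with h' | h'
    · exact hB (hP.mono (update_le inf_le_left subset_rfl) h')
    · exact hC (hP.mono (update_le inf_le_right subset_rfl) h')
  · rw [← Finset.piecewise_eq_of_notMem s V U hj, Function.update_eq_self]
    exact h V hV

lemma IsPartitionRegular.exists_forall_mem_forall_nhds [Finite ι] (hP : IsPartitionRegular P)
    (hU : ∀ i, IsCompact (U i)) (h : P U) :
    ∃ x : ι → X, (∀ i, x i ∈ U i) ∧ ∀ V : ι → Set X, (∀ i, V i ∈ 𝓝 (x i)) → P V := by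
  suffices localize : ∀ s : Finset ι, ∃ x : ι → X, (∀ i, x i ∈ U i) ∧
      ∀ V : ι → Set X, (∀ i ∈ s, V i ∈ 𝓝 (x i)) → P (s.piecewise V U) by
    have := Fintype.ofFinite ι
    obtain ⟨x, hx, hV⟩ := localize Finset.univ
    exact ⟨x, hx, fun V hVx => by simpa using hV V fun i _ => hVx i⟩
  intro s
  induction s using Finset.induction_on with
  | empty =>
    choose x hx using hP.nonempty h
    exact ⟨x, hx, fun V _ => by simpa using h⟩
  | insert j s hj ih =>
    obtain ⟨x, hx, hxV⟩ := ih
    obtain ⟨y, hy, hyW⟩ := hP.exists_mem_forall_update_piecewise hj (hU j) hxV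
    refine ⟨Function.update x j y, fun i => ?_, fun V hV => ?_⟩
    · rcases eq_or_ne i j with rfl | hij
      · rwa [Function.update_self]
      · rw [Function.update_of_ne hij]
        exact hx i
    · rw [Finset.forall_mem_insert, Function.update_self] at hV
      rw [Finset.piecewise_insert]
      refine hyW _ hV.1 V fun i hi => ?_
      simpa [ne_of_mem_of_not_mem hi hj] using hV.2 i hi

end Localization

section MuIETuples

variable {G X : Type*} [Group G] [MulAction G X] [MeasurableSpace X] {μ : Measure X}
  [IsProbabilityMeasure μ] {k : ℕ}

lemma isPartitionRegular_upperIndepDens_pos (hG : FolnerAmenable G) :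
    IsPartitionRegular fun A : Fin k → Set X => 0 < upperIndepDens G μ A where
  mono := upperIndepDens_pos_mono hG
  nonempty := nonempty_of_upperIndepDens_pos hG
  union := upperIndepDens_pos_union hG

lemma exists_isMuIETuple_of_upperIndepDens_pos [TopologicalSpace X] (hG : FolnerAmenable G)
    {U : Fin k → Set X} (hU : ∀ i, IsCompact (U i)) (h : 0 < upperIndepDens G μ U) :
    ∃ x : Fin k → X, (∀ i, x i ∈ U i) ∧ IsMuIETuple G μ x :=
  (isPartitionRegular_upperIndepDens_pos hG).exists_forall_mem_forall_nhds hU h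

end MuIETuples

section InvariantMeasures

open Filter Topology
open scoped BoundedContinuousFunction CompactlySupported

variable {G Y : Type*} [Group G] [MulAction G Y] [MeasurableSpace Y]

/-- The average `|F|⁻¹ ∑_{t ∈ F} t_* θ` of the translates of the measure `θ` over `F`. -/
noncomputable def translateAverage (F : Finset G) (θ : Measure Y) : Measure Y :=
  (F.card : ℝ≥0∞)⁻¹ • ∑ t ∈ F, θ.map (t • ·)

section Average

variable [MeasurableConstSMul G Y] {F : Finset G} {θ : Measure Y}

lemma isProbabilityMeasure_translateAverage [IsProbabilityMeasure θ] (hF : F.Nonempty) :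
    IsProbabilityMeasure (translateAverage F θ) where
  measure_univ := by
    simp [translateAverage, Measure.map_apply (measurable_const_smul _) .univ,
      ENNReal.inv_mul_cancel, hF.ne_empty]

lemma integral_translateAverage {f : Y → ℝ} (hf : ∀ t ∈ F, Integrable f (θ.map (t • ·))) :
    ∫ y, f y ∂translateAverage F θ = (F.card : ℝ)⁻¹ * ∑ t ∈ F, ∫ y, f (t • y) ∂θ := by
  rw [translateAverage, integral_smul_measure, integral_finsetSum_measure hf]
  simp only [ENNReal.toReal_inv, ENNReal.toReal_natCast, smul_eq_mul]
  congr 1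
  exact Finset.sum_congr rfl fun t ht =>
    integral_map (measurable_const_smul t).aemeasurable (hf t ht).aestronglyMeasurable

lemma measureReal_translateAverage [IsFiniteMeasure θ] {B : Set Y} (hB : MeasurableSet B) :
    (translateAverage F θ).real B =
      (F.card : ℝ)⁻¹ * ∑ t ∈ F, θ.real ((t • ·) ⁻¹' B) := by
  simp only [translateAverage, measureReal_def, Measure.smul_apply, Measure.finsetSum_apply,
    smul_eq_mul, ENNReal.toReal_mul, ENNReal.toReal_inv, ENNReal.toReal_natCast]
  rw [ENNReal.toReal_sum fun t _ => measure_ne_top _ _]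
  simp only [Measure.map_apply (measurable_const_smul _) hB]

end Average

variable [TopologicalSpace Y] [CompactSpace Y] [T2Space Y] [BorelSpace Y] [ContinuousConstSMul G Y]

lemma invariantMeasure_of_forall_integral_smul {ν : Measure Y} [ν.Regular] [IsFiniteMeasure ν]
    (h : ∀ (g : G) (f : Y →ᵇ ℝ), ∫ y, f (g • y) ∂ν = ∫ y, f y ∂ν) : InvariantMeasure G ν := by
  intro g B hB
  have hg : Continuous fun y : Y => g • y := continuous_const_smul g
  have : (ν.map (g • ·)).Regular := Measure.Regular.map (Homeomorph.smul g)
  have map_eq : ν.map (g • ·) = ν := Measure.ext_of_integral_eq_on_compactlySupported fun f => by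
    rw [integral_map hg.aemeasurable (map_continuous f).aestronglyMeasurable]
    exact h g (.mkOfCompact f.toContinuousMap)
  rw [← Measure.map_apply hg.measurable hB, map_eq]

lemma exists_invariantMeasure_tendsto_integral {ι : Type*} {l : Filter ι} [l.NeBot]
    {F : ι → Finset G} (hF : Tendsto F l (folnerFilter G)) (hne : ∀ i, (F i).Nonempty)
    (θ : ι → Measure Y) [∀ i, IsProbabilityMeasure (θ i)] :
    ∃ ν : Measure Y, IsProbabilityMeasure ν ∧ InvariantMeasure G ν ∧ ∃ l' ≤ l, l'.NeBot ∧
      ∀ f : Y →ᵇ ℝ, Tendsto (fun i => ∫ y, f y ∂translateAverage (F i) (θ i)) l'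
        (𝓝 (∫ y, f y ∂ν)) := by
  let ν' (i : ι) : ProbabilityMeasure Y :=
    ⟨translateAverage (F i) (θ i), isProbabilityMeasure_translateAverage (hne i)⟩
  let l' : Ultrafilter ι := .of l
  obtain ⟨ν₀, -, hν₀⟩ := isCompact_univ.ultrafilter_le_nhds (l'.map ν') (by simp)
  obtain ⟨ν, _, _, hν⟩ := Measure.exists_regular_eq_of_compactSpace (ν₀ : Measure Y)
  have tendsto_integral (f : Y →ᵇ ℝ) : Tendsto (fun i => ∫ y, f y ∂translateAverage (F i) (θ i)) l'
      (𝓝 (∫ y, f y ∂ν)) := by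
    rw [← hν]
    exact ProbabilityMeasure.tendsto_iff_forall_integral_tendsto.1 hν₀ f
  refine ⟨ν, ?_, ?_, l', Ultrafilter.of_le l, l'.neBot, tendsto_integral⟩
  · rw [isProbabilityMeasure_iff_real]
    simpa using (hν 1).symm
  · refine invariantMeasure_of_forall_integral_smul fun g f => ?_
    have integral_eq (f : Y →ᵇ ℝ) (i : ι) :=
      integral_translateAverage (F := F i) fun t _ => f.integrable ((θ i).map (t • ·))
    have abs_integral_le (i : ι) (t : G) : |∫ y, f (t • y) ∂θ i| ≤ ‖f‖ := by
      simpa using norm_integral_le_of_norm_le_const (μ := θ i)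
        (.of_forall fun y => f.norm_coe_le_norm (t • y))
    have tendsto_zero := tendsto_average_mul_left_sub_average
      (hF.mono_left (Ultrafilter.of_le l)) g abs_integral_le
    let fg : Y →ᵇ ℝ := f.compContinuous ⟨_, continuous_const_smul g⟩
    refine sub_eq_zero.1 (tendsto_nhds_unique ((tendsto_integral fg).sub (tendsto_integral f)) ?_)
    refine tendsto_zero.congr fun i => ?_
    rw [integral_eq fg, integral_eq f]
    simp only [mul_smul, fg, BoundedContinuousFunction.compContinuous_apply, ContinuousMap.coe_mk]

lemma exists_invariantMeasure_tendsto_translateAverage {ι : Type*} {l : Filter ι} [l.NeBot]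
    {F : ι → Finset G} (hF : Tendsto F l (folnerFilter G)) (hne : ∀ i, (F i).Nonempty)
    (θ : ι → Measure Y) [∀ i, IsProbabilityMeasure (θ i)] :
    ∃ ν : Measure Y, IsProbabilityMeasure ν ∧ InvariantMeasure G ν ∧ ∃ l' ≤ l, l'.NeBot ∧
      ∀ C, IsClopen C → Tendsto (fun i => (translateAverage (F i) (θ i)).real C) l'
        (𝓝 (ν.real C)) := by
  obtain ⟨ν, hν, hinv, l', hl', hne', htendsto⟩ := exists_invariantMeasure_tendsto_integral hF hne θ
  refine ⟨ν, hν, hinv, l', hl', hne', fun C hC => ?_⟩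
  simpa only [BoundedContinuousFunction.indicator_apply,
    integral_indicator_one hC.isOpen.measurableSet] using htendsto (.indicator C hC)

end InvariantMeasures

section JointSpace

open Filter
open ProbabilityTheory (uniformOn uniformOn_univ isProbabilityMeasure_uniformOn)

variable {G X : Type*} {k : ℕ}

lemma uniformOn_univ_preimage_equiv {α : Type*} [Finite α] [MeasurableSpace α]
    [MeasurableSingletonClass α] (e : α ≃ α) (S : Set α) :
    uniformOn univ (e ⁻¹' S) = uniformOn univ S := by
  have := Fintype.ofFinite α
  rw [uniformOn_univ, uniformOn_univ, ← e.image_symm_eq_preimage,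
    Measure.count_injective_image e.symm.injective]

/-- The partial labelling of `G` by `Fin k` which is `σ` on `J` and undefined elsewhere. It is
encoded by a map to `Fin (k + 1)`, where `0` means undefined and `i.succ` is the label `i`. -/
noncomputable def labelling {J : Finset G} (σ : J → Fin k) (s : G) : Fin (k + 1) :=
  if h : s ∈ J then (σ ⟨s, h⟩).succ else 0

lemma labelling_eq_succ_iff {J : Finset G} {σ : J → Fin k} {s : G} {i : Fin k} :
    labelling σ s = i.succ ↔ ∃ hs : s ∈ J, σ ⟨s, hs⟩ = i := by
  by_cases h : s ∈ J <;> simp [labelling, h, (Fin.succ_ne_zero i).symm]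

lemma labelling_ne_zero_iff {J : Finset G} {σ : J → Fin k} {s : G} :
    labelling σ s ≠ 0 ↔ s ∈ J := by
  by_cases h : s ∈ J <;> simp [labelling, h]

lemma exists_equiv_labelling_mul_right_iff [Group G] (F J : Finset G) {J₀ : Finset G}
    (τ τ' : J₀ → Fin k) (t : G) : ∃ e : (J → Fin k) ≃ (J → Fin k), ∀ σ,
      (∀ s ∈ F, labelling (e σ) (s * t) = labelling τ s) ↔
        ∀ s ∈ F, labelling σ (s * t) = labelling τ' s := by
  let swapLabel (u : J) : Equiv.Perm (Fin k) :=
    if h : u * t⁻¹ ∈ J₀ then Equiv.swap (τ ⟨_, h⟩) (τ' ⟨_, h⟩) else 1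
  refine ⟨Equiv.piCongrRight swapLabel, fun σ => forall₂_congr fun s _ => ?_⟩
  by_cases hst : s * t ∈ J <;> by_cases hs : s ∈ J₀ <;>
    simp [labelling, hst, hs, swapLabel, Equiv.swap_apply_eq_iff, (Fin.succ_ne_zero _).symm]

variable [Group G] [MulAction G X]

/-- The pairs of a point `x` and a partial labelling `ω` of `G`, encoded as in `labelling`, such
that `s • x ∈ U i` whenever `ω` gives `s` the label `i`. -/
def JointSpace (G : Type*) {X : Type*} [Group G] [MulAction G X] {k : ℕ} (U : Fin k → Set X) :
    Type _ :=
  {y : X × (G → Fin (k + 1)) // ∀ s (i : Fin k), y.2 s = i.succ → s • y.1 ∈ U i}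

namespace JointSpace

variable {U : Fin k → Set X}

/-- The underlying point of an element of the joint space. -/
def point (y : JointSpace G U) : X := y.1.1

/-- The underlying partial labelling of an element of the joint space. -/
def label (y : JointSpace G U) (s : G) : Fin (k + 1) := y.1.2 s

lemma smul_point_mem {y : JointSpace G U} {s : G} {i : Fin k} (h : y.label s = i.succ) :
    s • y.point ∈ U i :=
  y.2 s i h

instance : MulAction G (JointSpace G U) where
  smul g y := ⟨(g • y.point, fun s => y.label (s * g)), fun s i h => by
    simpa only [mul_smul] using smul_point_mem h⟩
  one_smul y := Subtype.ext (Prod.ext (one_smul G _) (funext fun s => congrArg y.label (mul_one s)))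
  mul_smul g h y := Subtype.ext (Prod.ext (mul_smul g h _)
    (funext fun s => congrArg y.label (mul_assoc s g h).symm))

lemma point_smul (g : G) (y : JointSpace G U) : (g • y).point = g • y.point := rfl

lemma label_smul (g : G) (y : JointSpace G U) (s : G) : (g • y).label s = y.label (s * g) := rfl

/-- The elements of the joint space whose labelling is, on the finite set `F`, that of `τ`. -/
def cylinder (U : Fin k → Set X) (F : Finset G) {J : Finset G} (τ : J → Fin k) :
    Set (JointSpace G U) :=
  {y | ∀ s ∈ F, y.label s = labelling τ s}

variable [TopologicalSpace X]

instance : TopologicalSpace (JointSpace G U) := instTopologicalSpaceSubtype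

instance : MeasurableSpace (JointSpace G U) := borel _

instance : BorelSpace (JointSpace G U) := ⟨rfl⟩

instance [T2Space X] : T2Space (JointSpace G U) := inferInstanceAs (T2Space (Subtype _))

lemma continuous_point : Continuous (point : JointSpace G U → X) :=
  continuous_fst.comp continuous_subtype_val

lemma continuous_label (s : G) : Continuous fun y : JointSpace G U => y.label s :=
  (continuous_apply s).comp (continuous_snd.comp continuous_subtype_val)

lemma isClopen_label_ne_zero (s : G) : IsClopen {y : JointSpace G U | y.label s ≠ 0} :=
  (isClopen_discrete {0}ᶜ).preimage (continuous_label s)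

lemma isClopen_cylinder (F : Finset G) {J : Finset G} (τ : J → Fin k) :
    IsClopen (cylinder U F τ) := by
  simp only [cylinder, ofPred_forall]
  exact isClopen_biInter_finset fun s _ => (isClopen_discrete {_}).preimage (continuous_label s)

section ContinuousConstSMul

variable [ContinuousConstSMul G X]

instance : ContinuousConstSMul G (JointSpace G U) where
  continuous_const_smul g := ((continuous_point.const_smul g).prodMk
    (continuous_pi fun s => continuous_label (s * g))).subtype_mk _

lemma compactSpace [CompactSpace X] (hU : ∀ i, IsClosed (U i)) : CompactSpace (JointSpace G U) := by
  refine isCompact_iff_compactSpace.1 (IsClosed.isCompact ?_)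
  change IsClosed {y : X × (G → Fin (k + 1)) | ∀ s (i : Fin k), y.2 s = i.succ → s • y.1 ∈ U i}
  simp only [ofPred_forall]
  refine isClosed_iInter fun s => isClosed_iInter fun i => isClosed_imp ?_ ?_
  · have hlabel : Continuous fun y : X × (G → Fin (k + 1)) => y.2 s :=
      (continuous_apply s).comp continuous_snd
    exact (isOpen_discrete {i.succ}).preimage hlabel
  · exact (hU i).preimage (continuous_fst.const_smul s)

end ContinuousConstSMul

lemma exists_uniform_measure [ContinuousConstSMul G X] [Nonempty (Fin k)] {J : Finset G}
    (hJ : IndepSet U univ (J : Set G)) (hne : J.Nonempty) :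
    ∃ θ : Measure (JointSpace G U), IsProbabilityMeasure θ ∧
      (∀ s ∈ J, θ.real {y | y.label s ≠ 0} = 1) ∧
      ∀ (t : G) (F : Finset G) {J₀ : Finset G} (τ τ' : J₀ → Fin k),
        θ.real ((t • ·) ⁻¹' cylinder U F τ) = θ.real ((t • ·) ⁻¹' cylinder U F τ') := by
  choose x _ hx using hJ.exists_mem hne
  let y (σ : J → Fin k) : JointSpace G U := ⟨(x σ, labelling σ), fun s i h => by
    obtain ⟨hs, rfl⟩ := labelling_eq_succ_iff.1 h
    exact hx σ ⟨s, hs⟩⟩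
  have hy : Measurable y := .of_discrete
  have : IsProbabilityMeasure (uniformOn (univ : Set (J → Fin k))) :=
    isProbabilityMeasure_uniformOn finite_univ univ_nonempty
  refine ⟨(uniformOn univ).map y, Measure.isProbabilityMeasure_map hy.aemeasurable,
    fun s hs => ?_, fun t F J₀ τ τ' => ?_⟩
  · rw [map_measureReal_apply hy (isClopen_label_ne_zero s).1.measurableSet,
      preimage_eq_univ_iff.2, probReal_univ]
    rintro _ ⟨σ, rfl⟩
    exact labelling_ne_zero_iff.2 hs
  · obtain ⟨e, he⟩ := exists_equiv_labelling_mul_right_iff F J τ τ' t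
    have measurableSet_preimage {τ : J₀ → Fin k} :
        MeasurableSet ((t • ·) ⁻¹' cylinder U F τ : Set (JointSpace G U)) :=
      (isClopen_cylinder F τ).1.measurableSet.preimage (measurable_const_smul t)
    rw [map_measureReal_apply hy measurableSet_preimage,
      map_measureReal_apply hy measurableSet_preimage, measureReal_def,
      ← uniformOn_univ_preimage_equiv e, ← measureReal_def]
    congr 1
    exact Set.ext he

lemma card_div_card_le_measureReal_translateAverage [ContinuousConstSMul G X]
    {θ : Measure (JointSpace G U)} [IsFiniteMeasure θ] {F J : Finset G} (hJF : J ⊆ F)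
    (hθ : ∀ s ∈ J, θ.real {y | y.label s ≠ 0} = 1) :
    (J.card : ℝ) / F.card ≤ (translateAverage F θ).real {y | y.label 1 ≠ 0} := by
  rw [measureReal_translateAverage (isClopen_label_ne_zero 1).1.measurableSet, div_eq_inv_mul]
  simp only [preimage_ofPred_eq, label_smul, one_mul]
  gcongr
  calc (J.card : ℝ) = ∑ s ∈ J, θ.real {y | y.label s ≠ 0} := by simp [Finset.sum_congr rfl hθ]
    _ ≤ ∑ s ∈ F, θ.real {y | y.label s ≠ 0} :=
      Finset.sum_le_sum_of_subset_of_nonneg hJF fun _ _ _ => measureReal_nonneg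

lemma exists_invariantMeasure_cylinder_eq [CompactSpace X] [T2Space X] [ContinuousConstSMul G X]
    [Nonempty (Fin k)] (hU : ∀ i, IsClosed (U i)) {d : ℝ} (hd : 0 < d)
    (h : ∃ᶠ F in folnerFilter G, d * F.card ≤ maxIndep U (fun _ : G => univ) F) :
    ∃ ν : Measure (JointSpace G U), IsProbabilityMeasure ν ∧ InvariantMeasure G ν ∧
      d ≤ ν.real {y | y.label 1 ≠ 0} ∧ ∀ (F : Finset G) {J : Finset G} (τ τ' : J → Fin k),
        ν.real (cylinder U F τ) = ν.real (cylinder U F τ') := by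
  have := compactSpace (G := G) hU
  let ι := {F : Finset G // d * F.card ≤ maxIndep U (fun _ : G => univ) F ∧ F.Nonempty}
  have : (comap (Subtype.val : ι → Finset G) (folnerFilter G)).NeBot :=
    comap_neBot_iff_frequently.2 ((h.and_eventually eventually_folnerFilter_nonempty).mono
      fun F hF => ⟨⟨F, hF⟩, rfl⟩)
  have exists_indepSet (F : ι) : ∃ J ⊆ F.1, J.Nonempty ∧ IndepSet U univ (J : Set G) ∧
      d * F.1.card ≤ J.card := by
    obtain ⟨J, hJF, hJ, hcard⟩ := exists_indepRel_card_eq_maxIndep U (fun _ : G => univ) F.1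
    have hle : d * F.1.card ≤ J.card := hcard ▸ F.2.1
    have hF : (0 : ℝ) < F.1.card := by exact_mod_cast F.2.2.card_pos
    exact ⟨J, hJF, Finset.card_pos.1 (by exact_mod_cast (mul_pos hd hF).trans_le hle), hJ, hle⟩
  choose J hJF hJne hJ hJcard using exists_indepSet
  choose θ hθ hlabel hcyl using fun F => exists_uniform_measure (hJ F) (hJne F)
  obtain ⟨ν, hν, hinv, l', -, _, htendsto⟩ :=
    exists_invariantMeasure_tendsto_translateAverage tendsto_comap (fun F : ι => F.2.2) θ
  refine ⟨ν, hν, hinv, ?_, fun F J₀ τ τ' => ?_⟩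
  · refine ge_of_tendsto' (htendsto _ (isClopen_label_ne_zero 1)) fun F => ?_
    have hF : (0 : ℝ) < F.1.card := by exact_mod_cast F.2.2.card_pos
    exact ((le_div_iff₀ hF).2 (hJcard F)).trans
      (card_div_card_le_measureReal_translateAverage (hJF F) (hlabel F))
  · refine tendsto_nhds_unique (htendsto _ (isClopen_cylinder F τ))
      ((htendsto _ (isClopen_cylinder F τ')).congr fun i => ?_)
    rw [measureReal_translateAverage (isClopen_cylinder F τ).1.measurableSet,
      measureReal_translateAverage (isClopen_cylinder F τ').1.measurableSet]
    simp only [hcyl i _ F τ τ']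

end JointSpace
end JointSpace

section MeasureConstruction

lemma exists_half_mul_le_and_lt_mul_of_sum {ι : Type*} {P : Finset ι} {N w b : ι → ℝ}
    {n d η : ℝ} (hn : 0 < n) (hd : 0 < d) (hη : 0 < η) (hN : ∀ i ∈ P, N i ≤ n)
    (hw : ∀ i ∈ P, 0 ≤ w i) (hb : ∀ i ∈ P, 0 ≤ b i) (sum_w : ∑ i ∈ P, w i = 1)
    (sum_b : ∑ i ∈ P, b i < η * d / 2) (sum_N : d * n ≤ ∑ i ∈ P, N i * w i) :
    ∃ i ∈ P, d / 2 * n ≤ N i ∧ b i < η * w i := by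
  have sum_lt : ∑ i ∈ P, (d / 2 * n * w i + n / η * b i) < ∑ i ∈ P, N i * w i :=
    calc ∑ i ∈ P, (d / 2 * n * w i + n / η * b i) = d / 2 * n + n / η * ∑ i ∈ P, b i := by
          rw [Finset.sum_add_distrib, ← Finset.mul_sum, ← Finset.mul_sum, sum_w, mul_one]
      _ < d / 2 * n + n / η * (η * d / 2) := by gcongr
      _ = d * n := by field_simp; ring
      _ ≤ ∑ i ∈ P, N i * w i := sum_N
  obtain ⟨i, hi, hlt⟩ := Finset.exists_lt_of_sum_lt sum_lt
  have hbi : 0 ≤ n / η * b i := mul_nonneg (by positivity) (hb i hi)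
  have hwi : 0 < w i := (hw i hi).lt_of_ne fun h0 => by
    rw [← h0, mul_zero, mul_zero, zero_add] at hlt
    exact hlt.not_ge hbi
  refine ⟨i, hi, (lt_of_mul_lt_mul_right (by linarith) hwi.le).le, ?_⟩
  have : n * (b i / η) < n * w i :=
    calc n * (b i / η) = n / η * b i := by ring
      _ < N i * w i := lt_of_le_of_lt (le_add_of_nonneg_left (by positivity)) hlt
      _ ≤ n * w i := by gcongr; exact hN i hi
  exact (div_lt_iff₀' hη).1 (lt_of_mul_lt_mul_left this hn.le)

lemma sub_half_pow_le {x : ℝ} (hx : 1 ≤ x) {n : ℕ} (hn : n ≠ 0) :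
    (x - 1 / 2) ^ n ≤ (1 - 1 / (2 * x)) * x ^ n := by
  have hx' : 1 / (2 * x) ≤ 1 := by
    rw [div_le_one (by positivity)]
    linarith
  have sub_half_eq : x - 1 / 2 = (1 - 1 / (2 * x)) * x := by field_simp
  rw [sub_half_eq, mul_pow]
  gcongr
  exact pow_le_of_le_one (by linarith) (by linarith [show 0 < 1 / (2 * x) by positivity]) hn

lemma exists_mul_card_le_maxIndep_of_le_card_itineraries (k : ℕ) [Nonempty (Fin k)] :
    ∃ c : ℝ, 0 < c ∧ ∀ {G X : Type*} [Group G] [MulAction G X] {A : Fin k → Set X} {D : Set X}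
      {F J : Finset G}, J ⊆ F →
        (1 - 1 / (2 * k)) * (k : ℝ) ^ J.card ≤ (itineraries J (fun _ => A) D).card →
          c * J.card ≤ maxIndep A (fun _ : G => D) F := by
  have hk : (1 : ℝ) ≤ k := by exact_mod_cast (Fin.pos_iff_nonempty.2 ‹_› : 0 < k)
  obtain ⟨c, hc, hshatter⟩ :=
    exists_shatters_mul_card_le (Fin k) (θ := (k : ℝ) - 1 / 2) (by norm_num)
  refine ⟨c, hc, fun {G X _ _ A D F J} hJF hJ => ?_⟩
  rcases eq_or_ne J.card 0 with hJ0 | hJ0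
  · simp [hJ0]
  obtain ⟨I, hI, hIcard⟩ := hshatter (itineraries J (fun _ => A) D) <| by
    simpa only [Fintype.card_coe] using (sub_half_pow_le hk hJ0).trans hJ
  have hIF := (Finset.map_subtype_subset I).trans hJF
  calc c * J.card ≤ (I.map (.subtype _)).card := by simpa using hIcard
    _ ≤ maxIndep A (fun _ : G => D) F := by
      exact_mod_cast (hI.indepSet fun _ _ => rfl).card_le_maxIndep hIF

variable {G X : Type*} [Group G] [MulAction G X] {k : ℕ} {U : Fin k → Set X}

namespace JointSpace

variable {F J : Finset G}

/-- The set of labelled elements of the finite set `F`. -/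
noncomputable def support (F : Finset G) (y : JointSpace G U) : Finset G :=
  {s ∈ F | y.label s ≠ 0}

lemma preimage_support_eq_iUnion_cylinder (hJ : J ⊆ F) :
    support F ⁻¹' {J} = ⋃ τ : J → Fin k, cylinder U F τ := by
  ext y
  simp only [mem_preimage, mem_singleton_iff, mem_iUnion]
  constructor
  · rintro rfl
    refine ⟨fun s => (y.label s).pred (Finset.mem_filter.1 s.2).2, fun s hs => ?_⟩
    by_cases h0 : y.label s = 0 <;> simp [labelling, support, hs, h0]
  · rintro ⟨τ, hτ⟩
    ext s
    refine Finset.mem_filter.trans ⟨fun ⟨hF, hs⟩ => ?_, fun hs => ⟨hJ hs, ?_⟩⟩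
    · exact labelling_ne_zero_iff.1 (hτ s hF ▸ hs)
    · exact (hτ s (hJ hs)).trans_ne (labelling_ne_zero_iff.2 hs)

lemma label_eq_succ_of_mem_cylinder (hJ : J ⊆ F) {τ : J → Fin k} {y : JointSpace G U}
    (hy : y ∈ cylinder U F τ) (s : J) : y.label s = (τ s).succ :=
  (hy s (hJ s.2)).trans (labelling_eq_succ_iff.2 ⟨s.2, rfl⟩)

lemma pairwise_disjoint_cylinder (hJ : J ⊆ F) :
    Pairwise fun τ τ' : J → Fin k => Disjoint (cylinder U F τ) (cylinder U F τ') :=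
  fun _ _ hne => Set.disjoint_left.2 fun _ hy hy' => hne <| funext fun s => Fin.succ_injective k <|
    (label_eq_succ_of_mem_cylinder hJ hy s).symm.trans (label_eq_succ_of_mem_cylinder hJ hy' s)

lemma mem_itineraries_of_mem_cylinder (hJ : J ⊆ F) {τ : J → Fin k} {y : JointSpace G U}
    (hy : y ∈ cylinder U F τ) {D : Set X} (hD : y.point ∈ D) :
    τ ∈ itineraries J (fun _ => U) D :=
  mem_itineraries.2 ⟨y.point, hD, fun s =>
    smul_point_mem (label_eq_succ_of_mem_cylinder hJ hy s)⟩

lemma support_subset (F : Finset G) (y : JointSpace G U) : support F y ⊆ F :=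
  Finset.filter_subset _ _

variable [TopologicalSpace X] {ν : Measure (JointSpace G U)}

lemma measurableSet_preimage_support (F J : Finset G) :
    MeasurableSet (support F ⁻¹' {J} : Set (JointSpace G U)) := by
  by_cases hJ : J ⊆ F
  · rw [preimage_support_eq_iUnion_cylinder hJ]
    exact .iUnion fun τ => (isClopen_cylinder F τ).1.measurableSet
  · convert MeasurableSet.empty
    exact eq_empty_of_forall_notMem fun y hy => hJ (hy ▸ support_subset F y)

lemma sum_measureReal_preimage_support_inter [IsFiniteMeasure ν] (F : Finset G)
    (B : Set (JointSpace G U)) :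
    ∑ J ∈ F.powerset, ν.real (support F ⁻¹' {J} ∩ B) = ν.real B := by
  have preimage_powerset : (support F ⁻¹' (F.powerset : Set (Finset G)) :
      Set (JointSpace G U)) = univ :=
    eq_univ_of_forall fun y => Finset.mem_coe.2 (Finset.mem_powerset.2 (support_subset F y))
  have sum_eq := sum_measureReal_preimage_singleton (μ := ν.restrict B) F.powerset
    fun J _ => measurableSet_preimage_support F J
  rw [preimage_powerset, measureReal_restrict_apply_univ] at sum_eq
  simpa only [measureReal_restrict_apply (measurableSet_preimage_support F _)] using sum_eq

lemma sum_card_mul_measureReal_preimage_support [IsFiniteMeasure ν] (F : Finset G) :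
    ∑ J ∈ F.powerset, J.card * ν.real (support F ⁻¹' {J}) =
      ∑ s ∈ F, ν.real {y | y.label s ≠ 0} := by
  have inter_eq (J : Finset G) {s : G} (hs : s ∈ F) :
      ν.real (support F ⁻¹' {J} ∩ {y | y.label s ≠ 0}) =
        if s ∈ J then ν.real (support F ⁻¹' {J}) else 0 := by
    have mem_iff {y : JointSpace G U} (hy : y ∈ support F ⁻¹' {J}) : y.label s ≠ 0 ↔ s ∈ J := by
      rw [← show support F y = J from hy]
      simp [support, hs]
    split_ifs with hsJ
    · have subset : support F ⁻¹' {J} ⊆ {y : JointSpace G U | y.label s ≠ 0} :=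
        fun y hy => (mem_iff hy).2 hsJ
      rw [inter_eq_left.2 subset]
    · have disjoint : Disjoint (support F ⁻¹' {J}) {y : JointSpace G U | y.label s ≠ 0} :=
        disjoint_left.2 fun y hy h => hsJ ((mem_iff hy).1 h)
      rw [disjoint.inter_eq, measureReal_empty]
  calc ∑ J ∈ F.powerset, J.card * ν.real (support F ⁻¹' {J})
      = ∑ J ∈ F.powerset, ∑ s ∈ F, ν.real (support F ⁻¹' {J} ∩ {y | y.label s ≠ 0}) :=
        Finset.sum_congr rfl fun J hJ => by
          rw [Finset.sum_congr rfl fun s hs => inter_eq J hs, Finset.sum_ite_mem,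
            Finset.inter_eq_right.2 (Finset.mem_powerset.1 hJ), Finset.sum_const, nsmul_eq_mul]
    _ = ∑ s ∈ F, ν.real {y | y.label s ≠ 0} := by
        rw [Finset.sum_comm]
        simp only [sum_measureReal_preimage_support_inter]

lemma measureReal_label_ne_zero (hν : InvariantMeasure G ν) (s : G) :
    ν.real {y | y.label s ≠ 0} = ν.real {y | y.label 1 ≠ 0} := by
  rw [measureReal_def, measureReal_def, ← hν s _ (isClopen_label_ne_zero 1).1.measurableSet]
  simp only [preimage_ofPred_eq, label_smul, one_mul]

lemma one_sub_mul_pow_le_card_itineraries [IsFiniteMeasure ν] (hJ : J ⊆ F)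
    (hν : ∀ τ τ' : J → Fin k, ν.real (cylinder U F τ) = ν.real (cylinder U F τ')) {D : Set X}
    {η : ℝ} (hη : ν.real (support F ⁻¹' {J} ∩ {y | y.point ∉ D}) <
      η * ν.real (support F ⁻¹' {J} : Set (JointSpace G U))) :
    (1 - η) * (k : ℝ) ^ J.card ≤ (itineraries J (fun _ => U) D).card := by
  obtain ⟨m, hm0, hm⟩ : ∃ m, 0 ≤ m ∧ ∀ τ : J → Fin k, ν.real (cylinder U F τ) = m := by
    cases isEmpty_or_nonempty (J → Fin k) with
    | inl _ => exact ⟨0, le_rfl, isEmptyElim⟩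
    | inr h => exact ⟨_, measureReal_nonneg, fun τ => hν τ (Classical.arbitrary _)⟩
  have measureReal_biUnion (S : Finset (J → Fin k)) :
      ν.real (⋃ τ ∈ S, cylinder U F τ) = S.card * m := by
    rw [measureReal_biUnion_finset (fun τ _ τ' _ h => pairwise_disjoint_cylinder hJ h)
      fun τ _ => (isClopen_cylinder F τ).1.measurableSet]
    simp [hm]
  have measureReal_support :
      ν.real (support F ⁻¹' {J} : Set (JointSpace G U)) = (k : ℝ) ^ J.card * m := by
    simpa [preimage_support_eq_iUnion_cylinder hJ] using measureReal_biUnion Finset.univ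
  have biUnion_subset : (⋃ τ ∈ (itineraries J (fun _ => U) D)ᶜ, cylinder U F τ) ⊆
      support F ⁻¹' {J} ∩ {y : JointSpace G U | y.point ∉ D} := by
    refine iUnion₂_subset fun τ hτ y hy => ⟨?_, fun hD => ?_⟩
    · rw [preimage_support_eq_iUnion_cylinder hJ]
      exact mem_iUnion_of_mem τ hy
    · exact Finset.mem_compl.1 hτ (mem_itineraries_of_mem_cylinder hJ hy hD)
  have card_compl_lt : ((itineraries J (fun _ => U) D)ᶜ.card : ℝ) < η * (k : ℝ) ^ J.card := by
    refine lt_of_mul_lt_mul_right ?_ hm0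
    rw [← measureReal_biUnion, mul_assoc, ← measureReal_support]
    exact (measureReal_mono biUnion_subset).trans_lt hη
  have card_add : ((itineraries J (fun _ => U) D)ᶜ.card : ℝ) +
      (itineraries J (fun _ => U) D).card = (k : ℝ) ^ J.card := by
    have card_add := (itineraries J (fun _ => U) D).card_compl_add_card
    rw [Fintype.card_fun, Fintype.card_fin, Fintype.card_coe] at card_add
    exact_mod_cast card_add
  linarith

lemma exists_subset_one_sub_mul_pow_le_card_itineraries [IsProbabilityMeasure ν]
    (hν : InvariantMeasure G ν)
    (hcyl : ∀ {J : Finset G} (τ τ' : J → Fin k), ν.real (cylinder U F τ) = ν.real (cylinder U F τ'))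
    (hF : F.Nonempty) {d η : ℝ} (hd : 0 < d) (hη : 0 < η) (hlabel : d ≤ ν.real {y | y.label 1 ≠ 0})
    {D : Set X} (hD : ν.real {y | y.point ∉ D} < η * d / 2) :
    ∃ J ⊆ F, d / 2 * F.card ≤ J.card ∧
      (1 - η) * (k : ℝ) ^ J.card ≤ (itineraries J (fun _ => U) D).card := by
  have sum_N : d * F.card ≤ ∑ J ∈ F.powerset,
      J.card * ν.real (support F ⁻¹' {J} : Set (JointSpace G U)) := by
    rw [sum_card_mul_measureReal_preimage_support, mul_comm, ← nsmul_eq_mul]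
    exact Finset.card_nsmul_le_sum _ _ _ fun s _ => hlabel.trans_eq
      (measureReal_label_ne_zero hν s).symm
  have sum_w : ∑ J ∈ F.powerset, ν.real (support F ⁻¹' {J} : Set (JointSpace G U)) = 1 := by
    simpa using sum_measureReal_preimage_support_inter (ν := ν) F univ
  have sum_b : ∑ J ∈ F.powerset,
      ν.real (support F ⁻¹' {J} ∩ {y : JointSpace G U | y.point ∉ D}) < η * d / 2 := by
    rwa [sum_measureReal_preimage_support_inter]
  obtain ⟨J, hJF, hJcard, hJ⟩ := exists_half_mul_le_and_lt_mul_of_sum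
    (by exact_mod_cast hF.card_pos) hd hη
    (fun J hJ => by exact_mod_cast Finset.card_le_card (Finset.mem_powerset.1 hJ))
    (fun _ _ => measureReal_nonneg) (fun _ _ => measureReal_nonneg) sum_w sum_b sum_N
  have hJF := Finset.mem_powerset.1 hJF
  exact ⟨J, hJF, hJcard, one_sub_mul_pow_le_card_itineraries hJF hcyl hJ⟩

lemma invariantMeasure_map_point [ContinuousConstSMul G X] [MeasurableSpace X] [BorelSpace X]
    (hν : InvariantMeasure G ν) : InvariantMeasure G (ν.map point) := fun s B hB => by
  have measurable_point : Measurable (point : JointSpace G U → X) := continuous_point.measurable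
  rw [Measure.map_apply measurable_point (hB.preimage (measurable_const_smul s)),
    Measure.map_apply measurable_point hB, ← hν s _ (measurable_point hB)]
  simp only [← preimage_comp, Function.comp_def, point_smul]

end JointSpace

open JointSpace in
lemma exists_invariantMeasure_upperIndepDens_pos [Nonempty (Fin k)] [TopologicalSpace X]
    [CompactSpace X] [T2Space X] [ContinuousConstSMul G X] [MeasurableSpace X] [BorelSpace X]
    (hU : ∀ i, IsClosed (U i)) {d : ℝ} (hd : 0 < d)
    (h : ∃ᶠ F in folnerFilter G, d * F.card ≤ maxIndep U (fun _ : G => univ) F) :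
    ∃ μ : Measure X, IsProbabilityMeasure μ ∧ InvariantMeasure G μ ∧ 0 < upperIndepDens G μ U := by
  obtain ⟨ν, hν, hinv, hlabel, hcyl⟩ := exists_invariantMeasure_cylinder_eq hU hd h
  have measurable_point : Measurable (point : JointSpace G U → X) := continuous_point.measurable
  have : IsProbabilityMeasure (ν.map point) :=
    Measure.isProbabilityMeasure_map measurable_point.aemeasurable
  obtain ⟨c, hc, hmaxIndep⟩ := exists_mul_card_le_maxIndep_of_le_card_itineraries k
  have hk : (0 : ℝ) < k := by exact_mod_cast Fin.pos_iff_nonempty.2 ‹_›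
  have hδ : 0 < 1 / (2 * k) * d / 4 := by positivity
  refine ⟨ν.map point, this, invariantMeasure_map_point hinv,
    upperIndepDens_pos_of_frequently hδ (c := c * (d / 2)) (by positivity)
      ((h.and_eventually eventually_folnerFilter_nonempty).mono fun F ⟨_, hF⟩ => ?_)⟩
  obtain ⟨D, hD, hμD, hmax⟩ := exists_maxIndep_eq_phiConst (μ := ν.map point) hδ.le U F
  have hDc : ν.real {y | y.point ∉ D} < 1 / (2 * k) * d / 2 :=
    calc ν.real {y | y.point ∉ D} = 1 - (ν.map point).real D := by
          rw [map_measureReal_apply measurable_point hD]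
          exact probReal_compl_eq_one_sub (measurable_point hD)
      _ < 1 / (2 * k) * d / 2 := by linarith
  obtain ⟨J, hJF, hJcard, hJ⟩ := exists_subset_one_sub_mul_pow_le_card_itineraries hinv
    (hcyl F) hF hd (by positivity) hlabel hDc
  calc c * (d / 2) * F.card = c * (d / 2 * F.card) := by ring
    _ ≤ c * J.card := by gcongr
    _ ≤ phiConst (ν.map point) U (1 / (2 * k) * d / 4) F := hmax ▸ hmaxIndep hJF hJ

end MeasureConstruction

section VariationalPrinciple

open Filter Topology

variable {G X : Type*} [Group G] [TopologicalSpace X] [MulAction G X] {k : ℕ} {x : Fin k → X}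

lemma isClosed_setOf_isIETuple : IsClosed {x : Fin k → X | IsIETuple G x} := by
  refine isClosed_of_closure_subset fun x hx U hU => ?_
  obtain ⟨z, hzU, hz⟩ := mem_closure_iff_nhds.1 hx (univ.pi fun i => interior (U i))
    (set_pi_mem_nhds finite_univ fun i _ => interior_mem_nhds.2 (hU i))
  exact hz U fun i => mem_interior_iff_mem_nhds.1 (hzU i (mem_univ i))

variable [MeasurableSpace X]

lemma IsMuIETuple.isIETuple {μ : Measure X} [IsProbabilityMeasure μ] (hG : FolnerAmenable G)
    (hx : IsMuIETuple G μ x) : IsIETuple G x := by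
  refine isIETuple_iff_frequently.2 fun U hU => ?_
  obtain ⟨δ, hδ, c, hc, hfreq⟩ := (upperIndepDens_pos_iff_frequently hG).1 (hx U hU)
  refine ⟨c, hc, hfreq.mono fun F hF => hF.trans ?_⟩
  exact_mod_cast phiConst_le_maxIndep_univ hδ.le U F

lemma IsIETuple.exists_isMuIETuple_mem_nhds [CompactSpace X] [T2Space X] [ContinuousConstSMul G X]
    [BorelSpace X] [Nonempty (Fin k)] (hG : FolnerAmenable G) (hx : IsIETuple G x)
    {W : Set (Fin k → X)} (hW : W ∈ 𝓝 x) : ∃ z ∈ W, ∃ μ : Measure X,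
      IsProbabilityMeasure μ ∧ InvariantMeasure G μ ∧ IsMuIETuple G μ z := by
  rw [nhds_pi, mem_pi'] at hW
  obtain ⟨I, V, hV, hVW⟩ := hW
  choose U hU hUc hUV using fun i => exists_mem_nhds_isClosed_subset (hV i)
  obtain ⟨d, hd, hfreq⟩ := isIETuple_iff_frequently.1 hx U hU
  obtain ⟨μ, hμ, hinv, hpos⟩ := exists_invariantMeasure_upperIndepDens_pos hUc hd hfreq
  obtain ⟨z, hzU, hz⟩ :=
    exists_isMuIETuple_of_upperIndepDens_pos hG (fun i => (hUc i).isCompact) hpos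
  exact ⟨z, hVW fun i _ => hUV i (hzU i), μ, hμ, hinv, hz⟩

end VariationalPrinciple

/-- Theorem: the set of IE-tuples of length `k` equals the closure of the union of the
sets of `μ`-IE-tuples over all `G`-invariant Borel probability measures `μ`. -/
theorem stmt9 {G X : Type*} [Group G] [TopologicalSpace X] [CompactSpace X] [T2Space X]
    [MulAction G X] [ContinuousConstSMul G X] [MeasurableSpace X] [BorelSpace X]
    (hamen : FolnerAmenable G) (k : ℕ) (hk : 1 ≤ k) :
    {x : Fin k → X | IsIETuple G x} =
      closure (⋃ μ : {μ : Measure X // IsProbabilityMeasure μ ∧ InvariantMeasure G μ},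
        {x : Fin k → X | IsMuIETuple G μ.1 x}) := by
  have : Nonempty (Fin k) := Fin.pos_iff_nonempty.1 hk
  refine Subset.antisymm (fun x hx => mem_closure_iff_nhds.2 fun W hW => ?_) <|
    closure_minimal (iUnion_subset fun ⟨μ, hμ, _⟩ x hx => ?_) isClosed_setOf_isIETuple
  · obtain ⟨z, hzW, μ, hμ, hinv, hz⟩ := IsIETuple.exists_isMuIETuple_mem_nhds hamen hx hW
    exact ⟨z, hzW, mem_iUnion.2 ⟨⟨μ, hμ, hinv⟩, hz⟩⟩
  · exact IsMuIETuple.isIETuple hamen hx
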